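/- For n, k ≥ 1, the polynomial x·b_n^{(k)}(x) from the symmetric decomposition A_n^{(k)}(x) = a_n^{(k)}(x) + x·b_n^{(k)}(x) is γ-positive with center n/2: x·b_n^{(k)}(x) = Σ_{i=1}^{⌊n/2⌋} γ̂_{n,k,i} x^i (1+x)^{n−2i}, where γ̂_{n,k,i} counts increasing pruned even k-ary forests on {1,...,n} whose rightmost tree is neither a singleton nor has its first k−1 root-children all leaves, having i old leaves, no young leaves, and no removable old or removable young leaves. In particular A_n^{(k)}(x) is bi-γ-positive and hence alternating increasing. -/

import Mathlib

open Polynomial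
open scoped Classical

noncomputable section

/-!  Increasing pruned even `k`-ary forests on a linearly ordered label set `α` are
encoded by parent functions `f : α → Option (α × Fin k)`: `f x = some (y, s)` means the
labeled node `x` is attached to the `s`-th (unlabeled) child of the labeled node `y`,
and `f x = none` means `x` is the root of a component.  The increasing condition says
that labels of the children of each node increase, so the ordered-tree structure is
determined by `f`; components are ordered by their (increasing) root labels.  -/

/-- The labeled node `u` has a labeled grand child (so it is an internal labeled node
carrying its `k` unlabeled children in the pruned tree). -/
def hasChild {α : Type} {k : ℕ} (f : α → Option (α × Fin k)) (u : α) : Prop :=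
  ∃ x s, f x = some (u, s)

/-- `f` encodes an increasing pruned even `k`-ary forest: parents carry smaller labels. -/
def IsForest {α : Type} [LT α] {k : ℕ} (f : α → Option (α × Fin k)) : Prop :=
  ∀ x y s, f x = some (y, s) → y < x

/-- `f` encodes an increasing pruned even `k`-ary tree: a forest with a unique root. -/
def IsTree {α : Type} [LT α] {k : ℕ} (f : α → Option (α × Fin k)) : Prop :=
  IsForest f ∧ ∃! r, f r = none

/-- `lleaf`: the number of labeled leaves. -/
noncomputable def lleafStat {α : Type} [Fintype α] {k : ℕ}
    (f : α → Option (α × Fin k)) : ℕ :=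
  (Finset.univ.filter fun u => ¬ hasChild f u).card

/-- `si`: the number of singleton components (roots that are leaves). -/
noncomputable def siStat {α : Type} [Fintype α] {k : ℕ}
    (f : α → Option (α × Fin k)) : ℕ :=
  (Finset.univ.filter fun u => f u = none ∧ ¬ hasChild f u).card

/-- A non-root labeled node is old if it carries the greatest label among all the
grand children of its grand parent. -/
def oldNode {α : Type} [LinearOrder α] {k : ℕ}
    (f : α → Option (α × Fin k)) (v : α) : Prop :=
  ∃ y s, f v = some (y, s) ∧ ∀ x : α, (∃ t, f x = some (y, t)) → x ≤ v

/-- A non-root labeled node that is not old is young. -/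
def youngNode {α : Type} [LinearOrder α] {k : ℕ}
    (f : α → Option (α × Fin k)) (v : α) : Prop :=
  (∃ y s, f v = some (y, s)) ∧ ¬ oldNode f v

/-- `oleaf`: the number of old labeled leaves. -/
noncomputable def oleafStat {α : Type} [LinearOrder α] [Fintype α] {k : ℕ}
    (f : α → Option (α × Fin k)) : ℕ :=
  (Finset.univ.filter fun v => oldNode f v ∧ ¬ hasChild f v).card

/-- `oint`: the number of old internal labeled nodes. -/
noncomputable def ointStat {α : Type} [LinearOrder α] [Fintype α] {k : ℕ}
    (f : α → Option (α × Fin k)) : ℕ :=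
  (Finset.univ.filter fun v => oldNode f v ∧ hasChild f v).card

/-- `F` has no young leaves. -/
def NoYoungLeaf {α : Type} [LinearOrder α] {k : ℕ}
    (f : α → Option (α × Fin k)) : Prop :=
  ∀ v : α, ¬ (youngNode f v ∧ ¬ hasChild f v)

/-- The generalized Foata–Strehl transformation `Φ_v`.  If `v` is an old internal node
with grand parent `u`, the subtrees hanging from the `k` children of `v` are transferred
(slotwise) to the corresponding children of `u`, turning `v` into a leaf; if `v` is a
young leaf, all subtrees hanging from the children of `u` whose root labels exceed `v`
are transferred (slotwise) to `k` freshly attached children of `v`; otherwise nothing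
happens. -/
noncomputable def phi {α : Type} [LinearOrder α] {k : ℕ} (v : α)
    (f : α → Option (α × Fin k)) : α → Option (α × Fin k) :=
  match f v with
  | none => f
  | some (u, _) =>
    if ∀ x : α, (∃ t, f x = some (u, t)) → x ≤ v then
      -- `v` is old
      if hasChild f v then
        (fun x => match f x with
          | some (w, j) => if w = v then some (u, j) else some (w, j)
          | none => none)
      else f
    else
      -- `v` is young
      if hasChild f v then f
      else
        (fun x => match f x with
          | some (w, j) => if w = u ∧ v < x then some (v, j) else some (w, j)
          | none => none)

/-- `u` is a removable old leaf of the forest `f`: an old leaf that is a grand child of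
the root `r` of its component, the only leaf among the grand children of `r`, the first
`k-1` children of `r` are leaves, and the label of `u` is smaller than the label of
every later root. -/
def removableOldLeaf {α : Type} [LinearOrder α] {k : ℕ}
    (f : α → Option (α × Fin k)) (u : α) : Prop :=
  oldNode f u ∧ ¬ hasChild f u ∧
  ∃ (r : α) (s : Fin k), f u = some (r, s) ∧ f r = none ∧
    (∀ x : α, (∃ t, f x = some (r, t)) → x ≠ u → hasChild f x) ∧
    (∀ (x : α) (j : Fin k), (j : ℕ) < k - 1 → f x ≠ some (r, j)) ∧
    (∀ r' : α, f r' = none → r < r' → u < r')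

/-- `u` is a removable young leaf of the forest `f`: a young leaf that is a grand child
of the root `r` of the rightmost component such that after applying `Φ_u` the first
`k-1` children of `r` are leaves. -/
noncomputable def removableYoungLeaf {α : Type} [LinearOrder α] {k : ℕ}
    (f : α → Option (α × Fin k)) (u : α) : Prop :=
  youngNode f u ∧ ¬ hasChild f u ∧
  ∃ (r : α) (s : Fin k), f u = some (r, s) ∧ f r = none ∧
    (∀ r' : α, f r' = none → r' ≤ r) ∧
    (∀ (x : α) (j : Fin k), (j : ℕ) < k - 1 → phi u f x ≠ some (r, j))

/-- The forest lies in the class `\overline{𝓕}_n(k)`: the rightmost tree is a singleton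
or the first `k-1` children of its root are leaves. -/
def inBarClass {α : Type} [LinearOrder α] {k : ℕ}
    (f : α → Option (α × Fin k)) : Prop :=
  ∃ r : α, f r = none ∧ (∀ r' : α, f r' = none → r' ≤ r) ∧
    (¬ hasChild f r ∨
      ∀ (x : α) (j : Fin k), (j : ℕ) < k - 1 → f x ≠ some (r, j))

/-- The forest lies in the class `\widehat{𝓕}_n(k)`: the rightmost tree is neither a
singleton nor has its first `k-1` root-children all leaves. -/
def inHatClass {α : Type} [LinearOrder α] {k : ℕ}
    (f : α → Option (α × Fin k)) : Prop :=
  ∃ r : α, f r = none ∧ (∀ r' : α, f r' = none → r' ≤ r) ∧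
    hasChild f r ∧ ∃ (x : α) (j : Fin k), (j : ℕ) < k - 1 ∧ f x = some (r, j)

/-- Number of excedances of a permutation of `{1,…,n}`. -/
def excStat {n : ℕ} (σ : Equiv.Perm (Fin n)) : ℕ :=
  (Finset.univ.filter fun i : Fin n => (i : ℕ) < (σ i : ℕ)).card

/-- Number of cycles (including fixed points) in the disjoint cycle decomposition. -/
def cycStat {n : ℕ} (σ : Equiv.Perm (Fin n)) : ℕ :=
  σ.cycleType.card + (Finset.univ.filter fun i => σ i = i).card

/-- `A_n^{(k)}(x) = Σ_{π ∈ S_n} x^{exc π} k^{n - cyc π}`, the `1/k`-Eulerian polynomial. -/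
def Apoly (k n : ℕ) : Polynomial ℝ :=
  ∑ σ : Equiv.Perm (Fin n), X ^ excStat σ * (C (k : ℝ)) ^ (n - cycStat σ)

/-! Give a forest the weight in which a removable old leaf (jointly with its grand parent) counts
`b * e`, any other old leaf (jointly with its grand parent) `a`, a young leaf `b`, every remaining
node `e`, except that the rightmost root is free when it puts the forest into `\overline{𝓕}_n(k)`.
Attaching a node with the greatest label acts on these weights as the derivation
`D b = D e = k a`, `D a = k a (b + e)`, up to the contribution of the rightmost root.  At
`a = b * e` this is also how inserting a letter acts on permutations weighted by excedances and
cycles, so the two parts of the generating function of forests add up to `A_n^{(k)}` at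
`(b, e) = (1, x)`.

The subalgebra generated by `b + e` and `a` is stable under `D`, so the generating functions depend
on `b` and `e` only through `b + e`, and `(1, x)` may be replaced by `(0, 1 + x)` with `a = x`
unchanged.  This kills every forest with a young or removable leaf; a surviving forest with `i` old
leaves contributes `x ^ i * (1 + x) ^ m`, where `m` counts its remaining weighted nodes.  Both
parts are therefore palindromic about consecutive half-integers, and the uniqueness of such a
decomposition identifies the second one with `x * b_n^{(k)}`. -/

section FiniteProducts

@[to_additive]
lemma prod_ite_eq_ite_of_exists_iff {ι M : Type*} [Fintype ι] [CommMonoid M] {p : ι → Prop}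
    [DecidablePred p] {q : Prop} [Decidable q] (hp : ∀ i j, p i → p j → i = j)
    (hq : (∃ i, p i) ↔ q) (c : M) :
    ∏ i, (if p i then c else 1) = if q then c else 1 := by
  split_ifs with h
  · obtain ⟨i, hi⟩ := hq.mpr h
    rw [Fintype.prod_eq_single i fun j hj => if_neg fun h => hj (hp j i h hi), if_pos hi]
  · exact Finset.prod_eq_one fun i _ => if_neg fun hi => h (hq.mp ⟨i, hi⟩)

@[to_additive]
lemma prod_ite_eq_mul_prod_erase {ι M : Type*} [Fintype ι] [DecidableEq ι] [CommMonoid M] (j : ι)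
    (c : M) (g : ι → M) : ∏ i, (if i = j then c else g i) = c * ∏ i ∈ Finset.univ.erase j, g i := by
  rw [← Finset.mul_prod_erase _ _ (Finset.mem_univ j), if_pos rfl]
  exact congrArg _ (Finset.prod_congr rfl fun i hi => if_neg (Finset.ne_of_mem_erase hi))

lemma sum_ite_lt_pred {M : Type*} [AddCommMonoid M] {k : ℕ} (hk : 1 ≤ k) (u v : M) :
    ∑ s : Fin k, (if (s : ℕ) < k - 1 then u else v) = (k - 1) • u + v := by
  obtain ⟨m, rfl⟩ := Nat.exists_eq_add_of_le' hk
  simp [Fin.sum_univ_castSucc]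

lemma derivation_prod {ι R A : Type*} [DecidableEq ι] [CommSemiring R] [CommSemiring A]
    [Algebra R A] (D : Derivation R A A) (s : Finset ι) (f : ι → A) :
    D (∏ i ∈ s, f i) = ∑ i ∈ s, D (f i) * ∏ j ∈ s.erase i, f j := by
  induction s using Finset.induction_on with
  | empty => simp
  | insert i s hi ih =>
    have hs : ∀ j ∈ s, D (f j) * ∏ l ∈ (insert i s).erase j, f l =
        f i * (D (f j) * ∏ l ∈ s.erase j, f l) := by
      intro j hj
      rw [Finset.erase_insert_of_ne fun h : i = j => hi (h ▸ hj),
        Finset.prod_insert fun h => hi (Finset.mem_of_mem_erase h), mul_left_comm]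
    rw [Finset.prod_insert hi, D.leibniz, ih, Finset.sum_insert hi, Finset.erase_insert hi,
      Finset.sum_congr rfl hs, ← Finset.mul_sum, smul_eq_mul, smul_eq_mul, add_comm,
      mul_comm (D (f i))]

end FiniteProducts

section PalindromicUnimodal

lemma choose_le_choose_succ_of_two_mul_lt {m r : ℕ} (h : 2 * r < m) :
    m.choose r ≤ m.choose (r + 1) := by
  rcases lt_or_ge r (m / 2) with h' | h'
  · exact Nat.choose_le_succ_of_lt_half_left h'
  · rw [show m = 2 * r + 1 by omega, Nat.choose_symm_half]

lemma coeff_eq_coeff_of_reflect_eq {R : Type*} [Semiring R] {N : ℕ} {p : R[X]}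
    (hp : p.reflect N = p) {i j : ℕ} (hij : i + j = N) : p.coeff i = p.coeff j := by
  conv_lhs => rw [← hp, coeff_reflect, revAt_le (by omega), show N - i = j by omega]

-- The two reflections compose to the shift `j ↦ j + 1`, which spreads `u.coeff 0 = 0`.
lemma eq_zero_of_coeff_symm {R : Type*} [Semiring R] {N : ℕ} {u : R[X]} (hdeg : u.natDegree ≤ N)
    (h₀ : u.coeff 0 = 0) (hN : ∀ {i j}, i + j = N → u.coeff i = u.coeff j)
    (hN' : ∀ {i j}, i + j + 1 = N → u.coeff (i + 1) = u.coeff (j + 1)) : u = 0 := by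
  ext j
  rw [coeff_zero]
  induction j with
  | zero => exact h₀
  | succ j ih =>
    rcases le_or_gt (j + 1) N with hj | hj
    · rw [hN' (show j + (N - (j + 1)) + 1 = N by omega),
        hN (show N - (j + 1) + 1 + j = N by omega), ih]
    · exact coeff_eq_zero_of_natDegree_lt (by omega)

/-- `p` is palindromic with centre `N / 2`, and its coefficients increase up to the centre.  Both
parts of the symmetric decomposition of the `1/k`-Eulerian polynomial are shown to be of this
kind. -/
structure IsPalindromicUnimodal {R : Type*} [Semiring R] [LE R] (N : ℕ) (p : R[X]) : Prop where
  natDegree_le : p.natDegree ≤ N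
  coeff_eq : ∀ {i j}, i + j = N → p.coeff i = p.coeff j
  coeff_le : ∀ {i}, 2 * i < N → p.coeff i ≤ p.coeff (i + 1)

namespace IsPalindromicUnimodal

lemma zero {R : Type*} [Semiring R] [PartialOrder R] (N : ℕ) :
    IsPalindromicUnimodal N (0 : R[X]) where
  natDegree_le := N.zero_le
  coeff_eq _ := rfl
  coeff_le _ := le_rfl

lemma sum {ι R : Type*} [Semiring R] [PartialOrder R] [IsOrderedAddMonoid R] {N : ℕ}
    {s : Finset ι} {p : ι → R[X]} (h : ∀ i ∈ s, IsPalindromicUnimodal N (p i)) :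
    IsPalindromicUnimodal N (∑ i ∈ s, p i) where
  natDegree_le := natDegree_sum_le_of_forall_le s p fun i hi => (h i hi).natDegree_le
  coeff_eq hij := by
    simp only [finsetSum_coeff]
    exact Finset.sum_congr rfl fun i hi => (h i hi).coeff_eq hij
  coeff_le hj := by
    simp only [finsetSum_coeff]
    exact Finset.sum_le_sum fun i hi => (h i hi).coeff_le hj

lemma X_pow_mul_one_add_X_pow {R : Type*} [Semiring R] [PartialOrder R] [IsOrderedRing R]
    (i m : ℕ) : IsPalindromicUnimodal (2 * i + m) (X ^ i * (1 + X : R[X]) ^ m) where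
  natDegree_le := by compute_degree; omega
  coeff_eq {j l} hjl := by
    simp only [coeff_X_pow_mul', coeff_one_add_X_pow]
    split_ifs
    · rw [Nat.choose_symm_of_eq_add (show m = (j - i) + (l - i) by omega)]
    · rw [Nat.choose_eq_zero_of_lt (by omega), Nat.cast_zero]
    · rw [Nat.choose_eq_zero_of_lt (by omega), Nat.cast_zero]
    · rfl
  coeff_le {j} hj := by
    simp only [coeff_X_pow_mul', coeff_one_add_X_pow]
    split_ifs with h₁ h₂
    · rw [Nat.succ_sub h₁]
      exact Nat.mono_cast (choose_le_choose_succ_of_two_mul_lt (by omega))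
    · omega
    · positivity
    · rfl

section Add

variable {R : Type*} [Semiring R] [PartialOrder R] [IsOrderedAddMonoid R] {N : ℕ} {p q : R[X]}

lemma coeff_add_le_coeff_add (hp : IsPalindromicUnimodal N p)
    (hq : IsPalindromicUnimodal (N + 1) q) {j : ℕ} (hj : 2 * j ≤ N) :
    (p + q).coeff j ≤ (p + q).coeff (N - j) := by
  rw [coeff_add, coeff_add, hp.coeff_eq (show N - j + j = N by omega),
    hq.coeff_eq (show N - j + (j + 1) = N + 1 by omega)]
  exact add_le_add_right (hq.coeff_le (by omega)) _

lemma coeff_add_rev_le_coeff_add (hp : IsPalindromicUnimodal N p)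
    (hq : IsPalindromicUnimodal (N + 1) q) {j : ℕ} (hj : 2 * j + 1 ≤ N) :
    (p + q).coeff (N - j) ≤ (p + q).coeff (j + 1) := by
  rw [coeff_add, coeff_add, hp.coeff_eq (show N - j + j = N by omega),
    hq.coeff_eq (show N - j + (j + 1) = N + 1 by omega)]
  exact add_le_add_left (hp.coeff_le (by omega)) _

end Add

lemma X_mul_eq_of_add_eq {R : Type*} [Ring R] [LE R] {N : ℕ} {p q : R[X]}
    (hp : IsPalindromicUnimodal N p) (hq : IsPalindromicUnimodal (N + 1) q) (hq₀ : q.coeff 0 = 0)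
    {a b : R[X]} (ha : a.natDegree ≤ N) (ha' : a.reflect N = a)
    (hb : b.reflect (N - 1) = b) (h : p + q = a + X * b) : X * b = q := by
  have hu : p - a = X * b - q := by
    rw [sub_eq_sub_iff_add_eq_add, h, add_comm]
  refine sub_eq_zero.mp <| hu ▸
    eq_zero_of_coeff_symm (N := N) ?_ ?_ (fun hij => ?_) fun {i j} hij => ?_
  · exact (natDegree_sub_le_of_le hp.natDegree_le ha).trans_eq (max_self N)
  · rw [hu, coeff_sub, hq₀, coeff_X_mul_zero, sub_zero]
  · rw [coeff_sub, coeff_sub, hp.coeff_eq hij, coeff_eq_coeff_of_reflect_eq ha' hij]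
  · rw [hu, coeff_sub, coeff_sub, coeff_X_mul, coeff_X_mul,
      hq.coeff_eq (show i + 1 + (j + 1) = N + 1 by omega),
      coeff_eq_coeff_of_reflect_eq hb (show i + j = N - 1 by omega)]

end IsPalindromicUnimodal

end PalindromicUnimodal

section CycleCount

open Equiv Equiv.Perm

variable {n : ℕ}

lemma cycStat_add_card_support (g : Perm (Fin n)) :
    cycStat g + g.support.card = g.cycleType.card + n := by
  have h := Finset.card_filter_add_card_filter_not (s := Finset.univ) (fun i : Fin n => g i = i)
  rw [Finset.card_univ, Fintype.card_fin] at h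
  exact (add_assoc _ _ _).trans (congrArg _ h)

lemma cycStat_le (g : Perm (Fin n)) : cycStat g ≤ n := by
  have h : g.cycleType.card ≤ g.support.card := by
    rw [← sum_cycleType]
    simpa using Multiset.card_nsmul_le_sum (s := g.cycleType) (a := 1)
      fun m hm => one_le_two.trans (two_le_of_mem_cycleType hm)
  have := cycStat_add_card_support g
  omega

lemma cycStat_mul_of_disjoint {g h : Perm (Fin n)} (hgh : Disjoint g h) :
    cycStat (g * h) + n = cycStat g + cycStat h := by
  have := cycStat_add_card_support g
  have := cycStat_add_card_support h
  have := cycStat_add_card_support (g * h)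
  rw [hgh.card_support_mul, hgh.cycleType_mul, Multiset.card_add] at this
  omega

lemma cycStat_swap_mul_of_isCycle {c : Perm (Fin n)} (hc : IsCycle c) {x : Fin n} (hx : c x ≠ x) :
    cycStat (swap x (c x) * c) = cycStat c + 1 := by
  have hcard := cycStat_add_card_support c
  have hcard' := cycStat_add_card_support (swap x (c x) * c)
  rw [card_cycleType_eq_one.mpr hc] at hcard
  by_cases hcx : c (c x) = x
  · have hswap : c = swap x (c x) := hc.eq_swap_of_apply_apply_eq_self hx hcx
    have hone : swap x (c x) * c = 1 := by
      conv_lhs => rw [hswap]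
      simp
    have htwo : c.support.card = 2 := by rw [hswap]; exact card_support_swap hx.symm
    rw [hone, support_one, cycleType_one, Finset.card_empty, Multiset.card_zero] at hcard'
    rw [hone]
    omega
  · rw [card_cycleType_eq_one.mpr (hc.swap_mul hx hcx), support_swap_mul_eq c x hcx,
      Finset.sdiff_singleton_eq_erase, Finset.card_erase_of_mem (mem_support.mpr hx)] at hcard'
    have := Finset.card_pos.mpr ⟨x, mem_support.mpr hx⟩
    omega

lemma disjoint_swap_mul {α : Type*} [DecidableEq α] {c d : Perm α} (hcd : Disjoint c d) {x : α}
    (hx : c x ≠ x) :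
    Disjoint (swap x (c x) * c) d := by
  intro y
  refine (hcd y).imp_left fun hy => ?_
  have hyx : y ≠ x := fun h => hx (h ▸ hy)
  rw [Perm.mul_apply, hy, swap_apply_of_ne_of_ne hyx fun h => hyx (c.injective (hy.trans h))]

lemma cycStat_swap_mul (g : Perm (Fin n)) {x : Fin n} (hx : g x ≠ x) :
    cycStat (swap x (g x) * g) = cycStat g + 1 := by
  have hmem : g.cycleOf x ∈ cycleFactorsFinset g :=
    cycleOf_mem_cycleFactorsFinset_iff.mpr (mem_support.mpr hx)
  obtain ⟨d, hdis, hg⟩ : ∃ d, Disjoint (g.cycleOf x) d ∧ g = g.cycleOf x * d :=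
    have hdis := (disjoint_mul_inv_of_mem_cycleFactorsFinset hmem).symm
    ⟨_, hdis, by rw [hdis.commute.eq, inv_mul_cancel_right]⟩
  have hcx : g.cycleOf x x = g x := cycleOf_apply_self g x
  have hx' : g.cycleOf x x ≠ x := hcx ▸ hx
  have hcard := cycStat_mul_of_disjoint hdis
  have hcard' := cycStat_mul_of_disjoint (disjoint_swap_mul hdis hx')
  rw [mul_assoc, ← hg, hcx] at hcard'
  rw [← hg] at hcard
  have := cycStat_swap_mul_of_isCycle (isCycle_cycleOf g hx) hx'
  rw [hcx] at this
  omega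

lemma decomposeFin_symm_zero_eq_extendDomain (e : Perm (Fin n)) :
    decomposeFin.symm (0, e) = e.extendDomain (finSuccAboveEquiv (0 : Fin (n + 1))) := by
  ext x
  refine congrArg Fin.val ?_
  induction x using Fin.cases with
  | zero =>
    rw [decomposeFin_symm_apply_zero, extendDomain_apply_not_subtype _ _ (by simp)]
  | succ x =>
    have := extendDomain_apply_image e (finSuccAboveEquiv (0 : Fin (n + 1))) x
    simp only [finSuccAboveEquiv_apply, Fin.zero_succAbove] at this
    rw [decomposeFin_symm_apply_succ, this, swap_self, refl_apply]

lemma cycStat_decomposeFin_symm_zero (e : Perm (Fin n)) :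
    cycStat (decomposeFin.symm (0, e)) = cycStat e + 1 := by
  have h := cycStat_add_card_support (decomposeFin.symm (0, e))
  have := cycStat_add_card_support e
  rw [decomposeFin_symm_zero_eq_extendDomain, cycleType_extendDomain, card_support_extend_domain,
    ← decomposeFin_symm_zero_eq_extendDomain] at h
  omega

lemma cycStat_decomposeFin_symm_succ (q : Fin n) (e : Perm (Fin n)) :
    cycStat (decomposeFin.symm (q.succ, e)) = cycStat e := by
  have hzero : decomposeFin.symm (q.succ, e) 0 = q.succ := decomposeFin_symm_apply_zero _ _
  have hswap : swap 0 q.succ * decomposeFin.symm (q.succ, e) = decomposeFin.symm (0, e) := by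
    ext x
    refine congrArg Fin.val ?_
    induction x using Fin.cases <;> simp
  have h := cycStat_swap_mul (decomposeFin.symm (q.succ, e)) (hzero ▸ Fin.succ_ne_zero q)
  rw [hzero, hswap, cycStat_decomposeFin_symm_zero] at h
  omega

end CycleCount

section ExcedanceCycleSum

open Equiv.Perm

variable {R : Type*} [CommSemiring R]

/-- The homogeneous bivariate `1/k`-Eulerian polynomial `∑ σ, k ^ (n - cyc σ) x ^ exc σ
y ^ (n - exc σ)`. -/
def excedanceCycleSum (k : ℕ) (x y : R) (n : ℕ) : R :=
  ∑ σ : Equiv.Perm (Fin n), (k : R) ^ (n - cycStat σ) * ∏ i, if i < σ i then x else y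

lemma Apoly_eq_excedanceCycleSum (k n : ℕ) : Apoly k n = excedanceCycleSum k X 1 n := by
  refine Finset.sum_congr rfl fun σ _ => ?_
  rw [Finset.prod_ite, Finset.prod_const, Finset.prod_const_one, mul_one, C_eq_natCast, mul_comm]
  rfl

lemma map_excedanceCycleSum {S F : Type*} [CommSemiring S] [FunLike F R S] [RingHomClass F R S]
    (φ : F) (k : ℕ) (x y : R) (n : ℕ) :
    φ (excedanceCycleSum k x y n) = excedanceCycleSum k (φ x) (φ y) n := by
  simp only [excedanceCycleSum, map_sum, map_mul, map_prod, map_pow, map_natCast, apply_ite φ]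

lemma prod_excedance_decomposeFin_symm_zero {n : ℕ} (x y : R) (e : Equiv.Perm (Fin n)) :
    (∏ i, if i < decomposeFin.symm (0, e) i then x else y) = y * ∏ i, if i < e i then x else y := by
  simp [Fin.prod_univ_succ]

-- Inserting the new letter into the cycle of `i` replaces the arc `i → e i` by an excedance and an
-- anti-excedance.
lemma prod_excedance_decomposeFin_symm_succ {n : ℕ} (x y : R) (i : Fin n) (e : Equiv.Perm (Fin n)) :
    (∏ j, if j < decomposeFin.symm ((e i).succ, e) j then x else y) =
      x * y * ∏ j ∈ Finset.univ.erase i, if j < e j then x else y := by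
  rw [Fin.prod_univ_succ, ← Finset.mul_prod_erase _ _ (Finset.mem_univ i), mul_assoc]
  have hi : decomposeFin.symm ((e i).succ, e) i.succ = 0 := by
    rw [decomposeFin_symm_apply_succ, Equiv.swap_apply_right]
  rw [decomposeFin_symm_apply_zero, if_pos (Fin.succ_pos _), hi, if_neg (Fin.not_lt_zero _)]
  congr 2
  refine Finset.prod_congr rfl fun j hj => ?_
  have hj' : (e j).succ ≠ (e i).succ := fun h =>
    Finset.ne_of_mem_erase hj (e.injective (Fin.succ_injective _ h))
  simp only [decomposeFin_symm_apply_succ, Equiv.swap_apply_of_ne_of_ne (Fin.succ_ne_zero _) hj',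
    Fin.succ_lt_succ_iff]

lemma excedanceCycleSum_succ {A : Type*} [CommSemiring A] [Algebra A R] (D : Derivation A R R)
    {k : ℕ} {x y : R} (hx : D x = k * (x * y)) (hy : D y = k * (x * y)) (n : ℕ) :
    excedanceCycleSum k x y (n + 1) =
      D (excedanceCycleSum k x y n) + y * excedanceCycleSum k x y n := by
  have hD : ∀ (e : Equiv.Perm (Fin n)) (i : Fin n), D (if i < e i then x else y) = k * (x * y) :=
    fun e i => by rw [apply_ite D, hx, hy, ite_self]
  unfold excedanceCycleSum
  rw [← Equiv.sum_comp decomposeFin.symm, Fintype.sum_prod_type_right, map_sum, Finset.mul_sum,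
    ← Finset.sum_add_distrib]
  refine Finset.sum_congr rfl fun e _ => ?_
  rw [Fin.sum_univ_succ, add_comm, ← Equiv.sum_comp e]
  congr 1
  · rw [← Nat.cast_pow, D.leibniz, D.map_natCast, smul_zero, add_zero, derivation_prod,
      smul_eq_mul, Finset.mul_sum]
    refine Finset.sum_congr rfl fun i _ => ?_
    rw [cycStat_decomposeFin_symm_succ, prod_excedance_decomposeFin_symm_succ, hD,
      Nat.sub_add_comm (cycStat_le e), pow_succ]
    push_cast
    ring
  · rw [cycStat_decomposeFin_symm_zero, prod_excedance_decomposeFin_symm_zero,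
      Nat.add_sub_add_right, mul_left_comm]

end ExcedanceCycleSum

section ForestNodes

variable {α : Type} {k : ℕ} {f : α → Option (α × Fin k)} {u v y z : α}

/-- No labeled node hangs from one of the first `k - 1` children of `z`. -/
def FirstSlotsEmpty (f : α → Option (α × Fin k)) (z : α) : Prop :=
  ∀ (x : α) (j : Fin k), (j : ℕ) < k - 1 → f x ≠ some (z, j)

lemma firstSlotsEmpty_of_not_hasChild (h : ¬ hasChild f z) : FirstSlotsEmpty f z :=
  fun x j _ hx => h ⟨x, j, hx⟩

variable [LinearOrder α]

/-- `z` is the root of the rightmost tree of the forest. -/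
def IsLastRoot (f : α → Option (α × Fin k)) (z : α) : Prop :=
  f z = none ∧ ∀ r, f r = none → r ≤ z

/-- The root of the rightmost tree, when it witnesses that the forest lies in the class
`\overline{𝓕}_n(k)`. -/
def IsOpenRoot (f : α → Option (α × Fin k)) (z : α) : Prop :=
  IsLastRoot f z ∧ FirstSlotsEmpty f z

/-- `v` is the old (that is, greatest) grand child of `z`. -/
def IsOldChild (f : α → Option (α × Fin k)) (z v : α) : Prop :=
  (∃ s, f v = some (z, s)) ∧ ∀ x, (∃ t, f x = some (z, t)) → x ≤ v

/-- `v` is an old leaf of the forest. -/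
def IsOldLeaf (f : α → Option (α × Fin k)) (v : α) : Prop :=
  oldNode f v ∧ ¬ hasChild f v

/-- `v` is a young leaf of the forest. -/
def IsYoungLeaf (f : α → Option (α × Fin k)) (v : α) : Prop :=
  youngNode f v ∧ ¬ hasChild f v

/-- The old grand child of `z` is a leaf. -/
def HasOldLeaf (f : α → Option (α × Fin k)) (z : α) : Prop :=
  ∃ v, IsOldChild f z v ∧ ¬ hasChild f v

/-- The old grand child of `z` is a leaf satisfying the conditions for a removable old leaf, apart
from the one that the other grand children of `z` are not leaves, which is automatic in the absence
of young leaves. -/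
def HasRemovableOldLeaf (f : α → Option (α × Fin k)) (z : α) : Prop :=
  f z = none ∧ FirstSlotsEmpty f z ∧
    ∃ v, IsOldChild f z v ∧ ¬ hasChild f v ∧ ∀ r, f r = none → z < r → v < r

lemma IsLastRoot.unique (hy : IsLastRoot f y) (hz : IsLastRoot f z) : y = z :=
  le_antisymm (hz.2 y hy.1) (hy.2 z hz.1)

lemma IsOldChild.unique (hu : IsOldChild f z u) (hv : IsOldChild f z v) : u = v :=
  le_antisymm (hv.2 u hu.1) (hu.2 v hv.1)

lemma IsOldChild.parent_unique (hy : IsOldChild f y v) (hz : IsOldChild f z v) : y = z := by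
  obtain ⟨⟨⟨s, hs⟩, -⟩, ⟨t, ht⟩, -⟩ := And.intro hy hz
  exact congrArg Prod.fst (Option.some.inj (hs.symm.trans ht))

lemma IsOldChild.hasOldLeaf_iff (h : IsOldChild f z v) : HasOldLeaf f z ↔ ¬ hasChild f v :=
  ⟨fun ⟨_, hu, huleaf⟩ => h.unique hu ▸ huleaf, fun hv => ⟨v, h, hv⟩⟩

lemma IsOldChild.hasChild (h : IsOldChild f z v) : hasChild f z :=
  ⟨v, h.1⟩

lemma IsOldChild.ne (hf : IsForest f) (h : IsOldChild f z v) : z ≠ v := by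
  obtain ⟨⟨s, hs⟩, -⟩ := h
  exact (hf v z s hs).ne

lemma HasOldLeaf.hasChild (h : HasOldLeaf f z) : hasChild f z :=
  h.elim fun _ hv => hv.1.hasChild

lemma HasRemovableOldLeaf.hasOldLeaf (h : HasRemovableOldLeaf f z) : HasOldLeaf f z :=
  let ⟨_, _, v, hv, hvleaf, _⟩ := h
  ⟨v, hv, hvleaf⟩

lemma IsOpenRoot.hasRemovableOldLeaf (hz : IsOpenRoot f z) (h : HasOldLeaf f z) :
    HasRemovableOldLeaf f z :=
  let ⟨v, hv, hvleaf⟩ := h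
  ⟨hz.1.1, hz.2, v, hv, hvleaf, fun r hr hzr => absurd (hz.1.2 r hr) hzr.not_ge⟩

lemma oldNode_iff_exists_isOldChild : oldNode f v ↔ ∃ z, IsOldChild f z v :=
  ⟨fun ⟨z, s, hs, hv⟩ => ⟨z, ⟨s, hs⟩, hv⟩, fun ⟨z, ⟨s, hs⟩, hv⟩ => ⟨z, s, hs, hv⟩⟩

lemma isOldLeaf_iff : IsOldLeaf f v ↔ ∃ z, IsOldChild f z v ∧ ¬ hasChild f v := by
  rw [IsOldLeaf, oldNode_iff_exists_isOldChild, exists_and_right]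

lemma oldNode.ne_none (h : oldNode f v) : f v ≠ none := by
  obtain ⟨z, s, hs, -⟩ := h
  exact hs ▸ Option.some_ne_none _

lemma youngNode.ne_none (h : youngNode f v) : f v ≠ none := by
  obtain ⟨⟨z, s, hs⟩, -⟩ := h
  exact hs ▸ Option.some_ne_none _

lemma inBarClass_iff_exists_isOpenRoot : inBarClass f ↔ ∃ r, IsOpenRoot f r :=
  exists_congr fun _ => ⟨fun ⟨h₁, h₂, h₃⟩ => ⟨⟨h₁, h₂⟩, h₃.elim firstSlotsEmpty_of_not_hasChild id⟩,
    fun ⟨⟨h₁, h₂⟩, h₃⟩ => ⟨h₁, h₂, Or.inr h₃⟩⟩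

end ForestNodes

section Weights

variable {R : Type*} {α : Type} [LinearOrder α] {k : ℕ}

/-- The default factor of a node in the weight of a forest: `1` for the open root and `e` for every
other node. -/
def internalWeight [One R] (e : R) (f : α → Option (α × Fin k)) (z : α) : R :=
  if IsOpenRoot f z then 1 else e

/-- The factor of the node `z` in the weight of a forest.  The factor of an old leaf is carried by
its grand parent: it is `a`, split as `b` times the weight of an internal node if the leaf is
removable. -/
def nodeWeight [CommSemiring R] (b e a : R) (f : α → Option (α × Fin k)) (z : α) : R :=
  if HasRemovableOldLeaf f z then b * internalWeight e f z
  else if HasOldLeaf f z then a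
  else if IsOldLeaf f z then 1
  else if IsYoungLeaf f z then b
  else internalWeight e f z

/-- The weight of a forest. The generating functions of forests by this weight turn out to depend
on `b` and `e` only through `b + e`, which is the invariance underlying the Foata–Strehl action. -/
def forestWeight [CommSemiring R] [Fintype α] (b e a : R) (f : α → Option (α × Fin k)) : R :=
  ∏ z, nodeWeight b e a f z

end Weights

section AddNode

variable {n k : ℕ} {f : Fin n → Option (Fin n × Fin k)} {c : Option (Fin n × Fin k)}
  {y z v : Fin n} {s : Fin k}

/-- Attach a new node with the greatest label to a forest at the place `c`; for `c = none` it
becomes a new root. -/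
def addNode (f : Fin n → Option (Fin n × Fin k)) (c : Option (Fin n × Fin k)) :
    Fin (n + 1) → Option (Fin (n + 1) × Fin k) :=
  Fin.snoc (α := fun _ => Option (Fin (n + 1) × Fin k))
    (fun x => (f x).map (Prod.map Fin.castSucc id)) (c.map (Prod.map Fin.castSucc id))

@[simp]
lemma addNode_castSucc (x : Fin n) :
    addNode f c x.castSucc = (f x).map (Prod.map Fin.castSucc id) :=
  Fin.snoc_castSucc _ _ x

@[simp]
lemma addNode_last : addNode f c (Fin.last n) = c.map (Prod.map Fin.castSucc id) :=
  Fin.snoc_last _ _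

lemma map_castSucc_eq_some_castSucc :
    c.map (Prod.map Fin.castSucc id) = some (y.castSucc, s) ↔ c = some (y, s) := by
  rcases c with _ | ⟨y', s'⟩ <;> simp

lemma map_castSucc_ne_some_last : c.map (Prod.map Fin.castSucc id) ≠ some (Fin.last n, s) := by
  rcases c with _ | ⟨y', s'⟩ <;> simp [Fin.castSucc_ne_last]

lemma exists_map_castSucc_eq {o : Option (Fin (n + 1) × Fin k)}
    (ho : ∀ s, o ≠ some (Fin.last n, s)) :
    ∃ c : Option (Fin n × Fin k), o = c.map (Prod.map Fin.castSucc id) := by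
  rcases o with _ | ⟨y, s⟩
  · exact ⟨none, rfl⟩
  · obtain ⟨y, rfl⟩ := Fin.exists_castSucc_eq.mpr fun h => ho s (h ▸ rfl)
    exact ⟨some (y, s), rfl⟩

lemma isForest_addNode : IsForest (addNode f c) ↔ IsForest f := by
  simp only [IsForest, Fin.forall_fin_succ', addNode_castSucc, addNode_last,
    map_castSucc_eq_some_castSucc, map_castSucc_ne_some_last, Fin.castSucc_lt_castSucc_iff,
    Fin.castSucc_lt_last]
  simp

lemma addNode_injective :
    Function.Injective fun p : (Fin n → Option (Fin n × Fin k)) × Option (Fin n × Fin k) =>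
      addNode p.1 p.2 := by
  have hmap : Function.Injective (Option.map (Prod.map Fin.castSucc (id : Fin k → Fin k))) :=
    Option.map_injective ((Fin.castSucc_injective n).prodMap Function.injective_id)
  rintro ⟨f, c⟩ ⟨f', c'⟩ h
  refine Prod.ext (funext fun x => hmap ?_) (hmap ?_)
  · simpa using congrFun h x.castSucc
  · simpa using congrFun h (Fin.last n)

lemma exists_addNode_eq {g : Fin (n + 1) → Option (Fin (n + 1) × Fin k)} (hg : IsForest g) :
    ∃ f c, addNode f c = g := by
  have hlast : ∀ x s, g x ≠ some (Fin.last n, s) := fun x s hx =>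
    (Fin.le_last x).not_gt (hg x _ s hx)
  choose p hp using fun x => exists_map_castSucc_eq (hlast x)
  refine ⟨fun x => p x.castSucc, p (Fin.last n), funext fun x => ?_⟩
  induction x using Fin.lastCases with
  | last => rw [addNode_last, hp]
  | cast x => rw [addNode_castSucc, hp]

lemma sum_isForest_succ {M : Type*} [AddCommMonoid M]
    (F : (Fin (n + 1) → Option (Fin (n + 1) × Fin k)) → M) :
    ∑ g with IsForest g, F g =
      ∑ f : Fin n → Option (Fin n × Fin k) with IsForest f, ∑ c, F (addNode f c) := by
  rw [← Finset.sum_product']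
  refine (Finset.sum_nbij (fun p : (Fin n → Option (Fin n × Fin k)) × Option (Fin n × Fin k) =>
    addNode p.1 p.2) ?_ addNode_injective.injOn ?_ fun _ _ => rfl).symm
  · rintro ⟨f, c⟩ hfc
    simpa [isForest_addNode] using hfc
  · intro g hg
    obtain ⟨f, c, rfl⟩ := exists_addNode_eq (Finset.mem_filter.mp hg).2
    exact ⟨(f, c), by simpa [isForest_addNode] using hg, rfl⟩

lemma hasChild_addNode_castSucc :
    hasChild (addNode f c) z.castSucc ↔ hasChild f z ∨ ∃ s, c = some (z, s) := by
  simp only [hasChild, Fin.exists_fin_succ', addNode_castSucc, addNode_last,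
    map_castSucc_eq_some_castSucc]

lemma not_hasChild_addNode_last : ¬ hasChild (addNode f c) (Fin.last n) := by
  simp [hasChild, Fin.exists_fin_succ']

lemma firstSlotsEmpty_addNode_castSucc : FirstSlotsEmpty (addNode f c) z.castSucc ↔
    FirstSlotsEmpty f z ∧ ∀ s : Fin k, (s : ℕ) < k - 1 → c ≠ some (z, s) := by
  simp only [FirstSlotsEmpty, Fin.forall_fin_succ', addNode_castSucc, addNode_last, ne_eq,
    map_castSucc_eq_some_castSucc]

lemma isOldChild_addNode_castSucc_castSucc :
    IsOldChild (addNode f c) z.castSucc v.castSucc ↔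
      IsOldChild f z v ∧ ∀ s, c ≠ some (z, s) := by
  simp only [IsOldChild, Fin.forall_fin_succ', addNode_castSucc, addNode_last,
    map_castSucc_eq_some_castSucc, Fin.castSucc_le_castSucc_iff, and_assoc, ne_eq,
    (Fin.castSucc_lt_last v).not_ge, imp_false, not_exists]

lemma isOldChild_addNode_castSucc_last :
    IsOldChild (addNode f c) z.castSucc (Fin.last n) ↔ ∃ s, c = some (z, s) := by
  simp only [IsOldChild, addNode_last, map_castSucc_eq_some_castSucc, Fin.le_last, implies_true,
    and_true]

lemma oldNode_addNode_castSucc : oldNode (addNode f c) v.castSucc ↔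
    ∃ z, IsOldChild f z v ∧ ∀ s, c ≠ some (z, s) := by
  simp only [oldNode_iff_exists_isOldChild, Fin.exists_fin_succ',
    isOldChild_addNode_castSucc_castSucc]
  simp [IsOldChild]

end AddNode

section AddChild

variable {n k : ℕ} {f : Fin n → Option (Fin n × Fin k)} {y z v : Fin n} {s : Fin k}

lemma hasChild_addChild :
    hasChild (addNode f (some (y, s))) z.castSucc ↔ hasChild f z ∨ z = y := by
  simp [hasChild_addNode_castSucc, eq_comm]

lemma isOldChild_addChild :
    IsOldChild (addNode f (some (y, s))) z.castSucc v.castSucc ↔ IsOldChild f z v ∧ z ≠ y := by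
  simp [isOldChild_addNode_castSucc_castSucc, eq_comm]

lemma isOldChild_addChild_last :
    IsOldChild (addNode f (some (y, s))) z.castSucc (Fin.last n) ↔ z = y := by
  simp [isOldChild_addNode_castSucc_last, eq_comm]

lemma firstSlotsEmpty_addChild : FirstSlotsEmpty (addNode f (some (y, s))) z.castSucc ↔
    FirstSlotsEmpty f z ∧ ((s : ℕ) < k - 1 → z ≠ y) := by
  rw [firstSlotsEmpty_addNode_castSucc]
  grind

lemma isLastRoot_addChild :
    IsLastRoot (addNode f (some (y, s))) z.castSucc ↔ IsLastRoot f z := by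
  simp [IsLastRoot, Fin.forall_fin_succ']

lemma isOpenRoot_addChild : IsOpenRoot (addNode f (some (y, s))) z.castSucc ↔
    IsOpenRoot f z ∧ ((s : ℕ) < k - 1 → z ≠ y) := by
  simp only [IsOpenRoot, isLastRoot_addChild, firstSlotsEmpty_addChild, and_assoc]

lemma not_isOpenRoot_addNode_some_last :
    ¬ IsOpenRoot (addNode f (some (y, s))) (Fin.last n) := by
  simp [IsOpenRoot, IsLastRoot]

lemma hasOldLeaf_addChild_self : HasOldLeaf (addNode f (some (y, s))) y.castSucc :=
  ⟨Fin.last n, isOldChild_addChild_last.mpr rfl, not_hasChild_addNode_last⟩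

lemma hasOldLeaf_addChild_of_ne (hz : z ≠ y) :
    HasOldLeaf (addNode f (some (y, s))) z.castSucc ↔ HasOldLeaf f z ∧ ¬ IsOldChild f z y := by
  simp only [HasOldLeaf, Fin.exists_fin_succ', isOldChild_addChild, isOldChild_addChild_last,
    hasChild_addChild, not_hasChild_addNode_last]
  grind [IsOldChild.unique]

lemma hasRemovableOldLeaf_addChild_self :
    HasRemovableOldLeaf (addNode f (some (y, s))) y.castSucc ↔
      IsOpenRoot f y ∧ ¬ (s : ℕ) < k - 1 := by
  simp only [HasRemovableOldLeaf, Fin.exists_fin_succ', Fin.forall_fin_succ',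
    isOldChild_addChild, isOldChild_addChild_last,
    hasChild_addChild, not_hasChild_addNode_last, firstSlotsEmpty_addChild, IsOpenRoot, IsLastRoot,
    addNode_castSucc, addNode_last, Option.map_eq_none_iff, Fin.castSucc_lt_castSucc_iff,
    Fin.castSucc_lt_last, (Fin.castSucc_lt_last _).not_gt, reduceCtorEq]
  grind

lemma hasRemovableOldLeaf_addChild_of_ne (hz : z ≠ y) :
    HasRemovableOldLeaf (addNode f (some (y, s))) z.castSucc ↔
      HasRemovableOldLeaf f z ∧ ¬ IsOldChild f z y := by
  simp only [HasRemovableOldLeaf, Fin.exists_fin_succ', Fin.forall_fin_succ',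
    isOldChild_addChild, isOldChild_addChild_last,
    hasChild_addChild, not_hasChild_addNode_last, firstSlotsEmpty_addChild, addNode_castSucc,
    addNode_last, Option.map_eq_none_iff, Fin.castSucc_lt_castSucc_iff, Fin.castSucc_lt_last,
    reduceCtorEq]
  grind [IsOldChild.unique]

lemma oldNode_addChild : oldNode (addNode f (some (y, s))) v.castSucc ↔
    oldNode f v ∧ ¬ IsOldChild f y v := by
  have hy : ∀ z, (∀ t, some (y, s) ≠ some (z, t)) ↔ z ≠ y := by simp [eq_comm]
  rw [oldNode_addNode_castSucc, oldNode_iff_exists_isOldChild]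
  simp only [hy]
  grind [IsOldChild.parent_unique]

lemma isOldLeaf_addChild : IsOldLeaf (addNode f (some (y, s))) z.castSucc ↔
    z ≠ y ∧ IsOldLeaf f z ∧ ¬ IsOldChild f y z := by
  rw [IsOldLeaf, oldNode_addChild, hasChild_addChild, IsOldLeaf]
  tauto

lemma isYoungLeaf_addChild : IsYoungLeaf (addNode f (some (y, s))) z.castSucc ↔
    z ≠ y ∧ (IsYoungLeaf f z ∨ IsOldChild f y z ∧ ¬ hasChild f z) := by
  rw [IsYoungLeaf, youngNode, oldNode_addChild, hasChild_addChild, IsYoungLeaf, youngNode]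
  simp only [Fin.exists_fin_succ', addNode_castSucc, map_castSucc_eq_some_castSucc,
    map_castSucc_ne_some_last]
  grind [IsOldChild]

end AddChild

section AddRoot

variable {n k : ℕ} {f : Fin n → Option (Fin n × Fin k)} {z v : Fin n}

lemma hasChild_addRoot : hasChild (addNode f none) z.castSucc ↔ hasChild f z := by
  simp [hasChild_addNode_castSucc]

lemma isOldChild_addRoot :
    IsOldChild (addNode f none) z.castSucc v.castSucc ↔ IsOldChild f z v := by
  simp [isOldChild_addNode_castSucc_castSucc]

lemma not_isOldChild_addRoot_last :
    ¬ IsOldChild (addNode f none) z.castSucc (Fin.last n) := by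
  simp [isOldChild_addNode_castSucc_last]

lemma firstSlotsEmpty_addRoot :
    FirstSlotsEmpty (addNode f none) z.castSucc ↔ FirstSlotsEmpty f z := by
  simp [firstSlotsEmpty_addNode_castSucc]

lemma not_isOpenRoot_addRoot : ¬ IsOpenRoot (addNode f none) z.castSucc :=
  fun h => (Fin.castSucc_lt_last z).not_ge (h.1.2 _ addNode_last)

lemma isOpenRoot_addRoot_last : IsOpenRoot (addNode f none) (Fin.last n) :=
  ⟨⟨addNode_last, fun r _ => Fin.le_last r⟩,
    firstSlotsEmpty_of_not_hasChild not_hasChild_addNode_last⟩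

lemma hasOldLeaf_addRoot : HasOldLeaf (addNode f none) z.castSucc ↔ HasOldLeaf f z := by
  simp only [HasOldLeaf, Fin.exists_fin_succ', isOldChild_addRoot, not_isOldChild_addRoot_last,
    hasChild_addRoot, false_and, or_false]

lemma hasRemovableOldLeaf_addRoot :
    HasRemovableOldLeaf (addNode f none) z.castSucc ↔ HasRemovableOldLeaf f z := by
  simp [HasRemovableOldLeaf, Fin.exists_fin_succ', Fin.forall_fin_succ', isOldChild_addRoot,
    not_isOldChild_addRoot_last, hasChild_addRoot, firstSlotsEmpty_addRoot]

lemma oldNode_addRoot : oldNode (addNode f none) v.castSucc ↔ oldNode f v := by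
  rw [oldNode_addNode_castSucc, oldNode_iff_exists_isOldChild]
  simp

lemma isOldLeaf_addRoot : IsOldLeaf (addNode f none) z.castSucc ↔ IsOldLeaf f z := by
  rw [IsOldLeaf, oldNode_addRoot, hasChild_addRoot, IsOldLeaf]

lemma isYoungLeaf_addRoot : IsYoungLeaf (addNode f none) z.castSucc ↔ IsYoungLeaf f z := by
  simp [IsYoungLeaf, youngNode, oldNode_addRoot, hasChild_addRoot, Fin.exists_fin_succ']

end AddRoot

section NodeWeight

variable {R : Type*} [CommSemiring R] {b e a : R} {n k : ℕ} {f : Fin n → Option (Fin n × Fin k)}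
  {y z : Fin n} {s : Fin k}

lemma not_hasOldLeaf_addNode_last {c : Option (Fin n × Fin k)} :
    ¬ HasOldLeaf (addNode f c) (Fin.last n) :=
  fun h => not_hasChild_addNode_last h.hasChild

lemma not_hasRemovableOldLeaf_addNode_last {c : Option (Fin n × Fin k)} :
    ¬ HasRemovableOldLeaf (addNode f c) (Fin.last n) :=
  fun h => not_hasOldLeaf_addNode_last h.hasOldLeaf

lemma nodeWeight_addRoot_last : nodeWeight b e a (addNode f none) (Fin.last n) = 1 := by
  rw [nodeWeight, if_neg not_hasRemovableOldLeaf_addNode_last,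
    if_neg not_hasOldLeaf_addNode_last, if_neg fun h => h.1.ne_none addNode_last,
    if_neg fun h => h.1.ne_none addNode_last, internalWeight, if_pos isOpenRoot_addRoot_last]

lemma nodeWeight_addRoot : nodeWeight b e a (addNode f none) z.castSucc =
    (if IsOpenRoot f z then e else 1) * nodeWeight b e a f z := by
  simp only [nodeWeight, internalWeight, hasRemovableOldLeaf_addRoot, hasOldLeaf_addRoot,
    isOldLeaf_addRoot, isYoungLeaf_addRoot, not_isOpenRoot_addRoot, if_false]
  by_cases hz : IsOpenRoot f z
  · have hold : ¬ IsOldLeaf f z := fun h => h.1.ne_none hz.1.1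
    have hyoung : ¬ IsYoungLeaf f z := fun h => h.1.ne_none hz.1.1
    by_cases h : HasOldLeaf f z
    · simp only [hz, hz.hasRemovableOldLeaf h, if_true, mul_one, mul_comm]
    · simp only [hz, mt HasRemovableOldLeaf.hasOldLeaf h, h, hold, hyoung, if_true, if_false,
        mul_one]
  · simp only [hz, if_false, one_mul]

lemma nodeWeight_addChild_last : nodeWeight b e a (addNode f (some (y, s))) (Fin.last n) = 1 := by
  have hold : oldNode (addNode f (some (y, s))) (Fin.last n) :=
    oldNode_iff_exists_isOldChild.mpr ⟨_, isOldChild_addChild_last.mpr rfl⟩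
  rw [nodeWeight, if_neg not_hasRemovableOldLeaf_addNode_last,
    if_neg not_hasOldLeaf_addNode_last, if_pos ⟨hold, not_hasChild_addNode_last⟩]

lemma nodeWeight_addChild_self : nodeWeight b e a (addNode f (some (y, s))) y.castSucc =
    if IsOpenRoot f y ∧ ¬ (s : ℕ) < k - 1 then b else a := by
  rw [nodeWeight, hasRemovableOldLeaf_addChild_self, if_pos hasOldLeaf_addChild_self]
  split_ifs with h
  · rw [internalWeight, if_pos (isOpenRoot_addChild.mpr ⟨h.1, fun hs => absurd hs h.2⟩), mul_one]
  · rfl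

lemma nodeWeight_addChild_of_ne (hz : z ≠ y) :
    nodeWeight b e a (addNode f (some (y, s))) z.castSucc =
      if IsOldChild f z y ∧ ¬ hasChild f y then internalWeight e f z
      else if IsOldChild f y z ∧ ¬ hasChild f z then b
      else nodeWeight b e a f z := by
  have hopen : IsOpenRoot (addNode f (some (y, s))) z.castSucc ↔ IsOpenRoot f z := by
    simp [isOpenRoot_addChild, hz]
  simp only [nodeWeight, internalWeight, hasRemovableOldLeaf_addChild_of_ne hz,
    hasOldLeaf_addChild_of_ne hz, isOldLeaf_addChild, isYoungLeaf_addChild, hopen]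
  have h₁ : HasRemovableOldLeaf f z → HasOldLeaf f z := HasRemovableOldLeaf.hasOldLeaf
  have h₂ : HasOldLeaf f z → hasChild f z := HasOldLeaf.hasChild
  have h₃ : IsOldChild f z y → (HasOldLeaf f z ↔ ¬ hasChild f y) := IsOldChild.hasOldLeaf_iff
  have h₄ : IsOldLeaf f z → ¬ hasChild f z := fun h => h.2
  have h₅ : IsYoungLeaf f z → ¬ hasChild f z := fun h => h.2
  grind

end NodeWeight

section Transitions

variable {R : Type*} [CommSemiring R] {b e a : R} {n k : ℕ} {f : Fin n → Option (Fin n × Fin k)}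
  {p r y z : Fin n} {s : Fin k}

lemma nodeWeight_of_isOldLeaf (h : IsOldLeaf f z) : nodeWeight b e a f z = 1 := by
  have hz : ¬ HasOldLeaf f z := fun h' => h.2 h'.hasChild
  rw [nodeWeight, if_neg (mt HasRemovableOldLeaf.hasOldLeaf hz), if_neg hz, if_pos h]

lemma forestWeight_addRoot : forestWeight b e a (addNode f none) =
    (if inBarClass f then e else 1) * forestWeight b e a f := by
  rw [forestWeight, Fin.prod_univ_castSucc, nodeWeight_addRoot_last, mul_one]
  simp only [nodeWeight_addRoot, Finset.prod_mul_distrib]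
  rw [prod_ite_eq_ite_of_exists_iff (fun i j hi hj => hi.1.unique hj.1)
    inBarClass_iff_exists_isOpenRoot.symm, forestWeight]

lemma forestWeight_addChild_of_not_isOldLeaf (hf : IsForest f) (hy : ¬ IsOldLeaf f y) :
    forestWeight b e a (addNode f (some (y, s))) =
      (if IsOpenRoot f y ∧ ¬ (s : ℕ) < k - 1 then b else a) *
        ((if HasOldLeaf f y then b else 1) *
          ∏ z ∈ Finset.univ.erase y, nodeWeight b e a f z) := by
  have hnode : ∀ z, nodeWeight b e a (addNode f (some (y, s))) z.castSucc =
      (if z = y then if IsOpenRoot f y ∧ ¬ (s : ℕ) < k - 1 then b else a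
        else nodeWeight b e a f z) * if IsOldChild f y z ∧ ¬ hasChild f z then b else 1 := by
    intro z
    rcases eq_or_ne z y with rfl | hz
    · have hself : ¬ (IsOldChild f z z ∧ ¬ hasChild f z) := fun h => h.1.ne hf rfl
      rw [nodeWeight_addChild_self, if_pos rfl, if_neg hself, mul_one]
    · have hzy : ¬ (IsOldChild f z y ∧ ¬ hasChild f y) := fun h =>
        hy (isOldLeaf_iff.mpr ⟨z, h⟩)
      rw [nodeWeight_addChild_of_ne hz, if_neg hzy, if_neg hz]
      split_ifs with h
      · rw [nodeWeight_of_isOldLeaf (isOldLeaf_iff.mpr ⟨y, h⟩), one_mul]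
      · rw [mul_one]
  rw [forestWeight, Fin.prod_univ_castSucc, nodeWeight_addChild_last, mul_one,
    Finset.prod_congr rfl fun z _ => hnode z, Finset.prod_mul_distrib, prod_ite_eq_mul_prod_erase,
    prod_ite_eq_ite_of_exists_iff (q := HasOldLeaf f y) (fun i j hi hj => hi.1.unique hj.1) Iff.rfl,
    mul_assoc, mul_comm (∏ _ ∈ _, _)]

lemma forestWeight_addChild_of_isOldLeaf (hf : IsForest f) (hp : IsOldChild f p y)
    (hy : ¬ hasChild f y) :
    forestWeight b e a (addNode f (some (y, s))) =
      a * (internalWeight e f p * ∏ z ∈ Finset.univ.erase p, nodeWeight b e a f z) := by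
  have hold : IsOldLeaf f y := isOldLeaf_iff.mpr ⟨p, hp, hy⟩
  have hnode : ∀ z, nodeWeight b e a (addNode f (some (y, s))) z.castSucc =
      (if z = y then a else 1) * if z = p then internalWeight e f p else nodeWeight b e a f z := by
    intro z
    rcases eq_or_ne z y with rfl | hz
    · rw [nodeWeight_addChild_self, if_neg fun h => hold.1.ne_none h.1.1.1, if_pos rfl,
        if_neg (hp.ne hf).symm, nodeWeight_of_isOldLeaf hold, mul_one]
    · rw [nodeWeight_addChild_of_ne hz, if_neg hz, one_mul]
      rcases eq_or_ne z p with rfl | hzp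
      · rw [if_pos ⟨hp, hy⟩, if_pos rfl]
      · rw [if_neg fun h => hzp (h.1.parent_unique hp), if_neg fun h => hy h.1.hasChild, if_neg hzp]
  rw [forestWeight, Fin.prod_univ_castSucc, nodeWeight_addChild_last, mul_one,
    Finset.prod_congr rfl fun z _ => hnode z, Finset.prod_mul_distrib, Fintype.prod_ite_eq',
    prod_ite_eq_mul_prod_erase]

lemma forestWeight_addChild_of_isOpenRoot (hf : IsForest f) (hr : IsOpenRoot f r) :
    forestWeight b e a (addNode f (some (r, s))) =
      (if (s : ℕ) < k - 1 then a else b) * forestWeight b e a f := by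
  have hold : ¬ IsOldLeaf f r := fun h => h.1.ne_none hr.1.1
  have hyoung : ¬ IsYoungLeaf f r := fun h => h.1.ne_none hr.1.1
  have hroot : nodeWeight b e a f r = if HasOldLeaf f r then b else 1 := by
    by_cases h : HasOldLeaf f r
    · rw [nodeWeight, if_pos (hr.hasRemovableOldLeaf h), internalWeight, if_pos hr, mul_one,
        if_pos h]
    · rw [nodeWeight, if_neg (mt HasRemovableOldLeaf.hasOldLeaf h), if_neg h, if_neg hold,
        if_neg hyoung, internalWeight, if_pos hr, if_neg h]
  rw [forestWeight_addChild_of_not_isOldLeaf hf hold, ← hroot,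
    Finset.mul_prod_erase _ _ (Finset.mem_univ r), forestWeight]
  simp only [hr, true_and, ite_not]

lemma forestWeight_addChild_of_not_isOpenRoot (hf : IsForest f) (hy : ¬ IsOpenRoot f y) :
    forestWeight b e a (addNode f (some (y, s))) =
      a * ((∑ p, if IsOldChild f p y ∧ ¬ hasChild f y then
          internalWeight e f p * ∏ z ∈ Finset.univ.erase p, nodeWeight b e a f z else 0) +
        if IsOldLeaf f y then 0 else
          (if HasOldLeaf f y then b else 1) *
            ∏ z ∈ Finset.univ.erase y, nodeWeight b e a f z) := by
  by_cases hold : IsOldLeaf f y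
  · obtain ⟨p, hp, hleaf⟩ := isOldLeaf_iff.mp hold
    rw [forestWeight_addChild_of_isOldLeaf hf hp hleaf, if_pos hold, add_zero,
      Fintype.sum_eq_single p fun q hq => if_neg fun h => hq (h.1.parent_unique hp),
      if_pos ⟨hp, hleaf⟩]
  · rw [forestWeight_addChild_of_not_isOldLeaf hf hold, if_neg fun h => hy h.1, if_neg hold,
      Finset.sum_eq_zero fun p _ => if_neg fun h => hold (isOldLeaf_iff.mpr ⟨p, h⟩), zero_add]

section Derivation

variable {A : Type*} [CommSemiring A] [Algebra A R] {D : Derivation A R R}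

lemma derivation_nodeWeight (hb : D b = k * a) (he : D e = k * a) (ha : D a = k * a * (b + e))
    (f : Fin n → Option (Fin n × Fin k)) (z : Fin n) :
    D (nodeWeight b e a f z) = k * a * ((if HasOldLeaf f z then internalWeight e f z else 0) +
      if IsOpenRoot f z ∨ IsOldLeaf f z then 0 else if HasOldLeaf f z then b else 1) := by
  have h₁ : HasRemovableOldLeaf f z → HasOldLeaf f z := HasRemovableOldLeaf.hasOldLeaf
  have h₂ : IsOpenRoot f z → HasOldLeaf f z → HasRemovableOldLeaf f z :=
    IsOpenRoot.hasRemovableOldLeaf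
  have h₃ : IsOldLeaf f z → ¬ HasOldLeaf f z := fun h h' => h.2 h'.hasChild
  have h₄ : IsOpenRoot f z → ¬ IsOldLeaf f z ∧ ¬ IsYoungLeaf f z := fun h =>
    ⟨fun h' => h'.1.ne_none h.1.1, fun h' => h'.1.ne_none h.1.1⟩
  have hbe : D (b * e) = k * a * (b + e) := by
    rw [D.leibniz, hb, he, smul_eq_mul, smul_eq_mul]
    ring
  have h1 : D 1 = 0 := D.map_one_eq_zero
  simp only [nodeWeight, internalWeight, apply_ite D, mul_ite, mul_one, hb, he, ha, hbe, h1]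
  split_ifs <;> simp_all [add_comm]

lemma sum_forestWeight_addChild (hf : IsForest f) (hb : D b = k * a) (he : D e = k * a)
    (ha : D a = k * a * (b + e)) :
    ∑ y, (if IsOpenRoot f y then 0 else ∑ s, forestWeight b e a (addNode f (some (y, s)))) =
      D (forestWeight b e a f) := by
  have hchild : ∀ y,
      (if IsOpenRoot f y then 0 else ∑ s, forestWeight b e a (addNode f (some (y, s)))) =
        k * a * ((∑ p, if IsOldChild f p y ∧ ¬ hasChild f y then
            internalWeight e f p * ∏ z ∈ Finset.univ.erase p, nodeWeight b e a f z else 0) +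
          if IsOpenRoot f y ∨ IsOldLeaf f y then 0 else
            (if HasOldLeaf f y then b else 1) *
              ∏ z ∈ Finset.univ.erase y, nodeWeight b e a f z) := by
    intro y
    by_cases hy : IsOpenRoot f y
    · have hold : ∀ p, ¬ (IsOldChild f p y ∧ ¬ hasChild f y) := fun p h =>
        (oldNode_iff_exists_isOldChild.mpr ⟨p, h.1⟩).ne_none hy.1.1
      rw [if_pos hy, if_pos (Or.inl hy), Finset.sum_eq_zero fun p _ => if_neg (hold p), add_zero,
        mul_zero]
    · simp only [forestWeight_addChild_of_not_isOpenRoot hf hy, hy, if_false, false_or,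
        Finset.sum_const, Finset.card_univ, Fintype.card_fin, nsmul_eq_mul, mul_assoc]
  rw [Finset.sum_congr rfl fun y _ => hchild y, ← Finset.mul_sum, Finset.sum_add_distrib,
    Finset.sum_comm, ← Finset.sum_add_distrib, forestWeight, derivation_prod, Finset.mul_sum]
  refine Finset.sum_congr rfl fun p _ => ?_
  rw [sum_ite_eq_ite_of_exists_iff (q := HasOldLeaf f p)
    (fun i j hi hj => hi.1.unique hj.1) Iff.rfl, derivation_nodeWeight hb he ha,
    mul_assoc (k * a : R), add_mul]
  simp only [ite_mul, zero_mul]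

end Derivation

end Transitions

section Recurrences

variable {R : Type*} [CommSemiring R] {b e a : R} {n k : ℕ} {f : Fin n → Option (Fin n × Fin k)}
  {y : Fin n} {s : Fin k}

/-- The generating function of the forests in `\overline{𝓕}_n(k)`. -/
def barSum (k : ℕ) (b e a : R) (n : ℕ) : R :=
  ∑ f : Fin n → Option (Fin n × Fin k) with IsForest f,
    if inBarClass f then forestWeight b e a f else 0

/-- The generating function of the forests that are not in `\overline{𝓕}_n(k)`. -/
def hatSum (k : ℕ) (b e a : R) (n : ℕ) : R :=
  ∑ f : Fin n → Option (Fin n × Fin k) with IsForest f,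
    if inBarClass f then 0 else forestWeight b e a f

lemma inBarClass_addRoot : inBarClass (addNode f none) :=
  inBarClass_iff_exists_isOpenRoot.mpr ⟨_, isOpenRoot_addRoot_last⟩

lemma inBarClass_addChild : inBarClass (addNode f (some (y, s))) ↔
    inBarClass f ∧ ¬ (IsOpenRoot f y ∧ (s : ℕ) < k - 1) := by
  simp only [inBarClass_iff_exists_isOpenRoot, Fin.exists_fin_succ', isOpenRoot_addChild,
    not_isOpenRoot_addNode_some_last]
  grind [IsLastRoot.unique, IsOpenRoot]

lemma inBarClass_addChild_of_isOpenRoot (hy : IsOpenRoot f y) :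
    inBarClass (addNode f (some (y, s))) ↔ ¬ (s : ℕ) < k - 1 := by
  simp only [inBarClass_addChild, inBarClass_iff_exists_isOpenRoot.mpr ⟨y, hy⟩, hy, true_and]

lemma inBarClass_addChild_of_not_isOpenRoot (hy : ¬ IsOpenRoot f y) :
    inBarClass (addNode f (some (y, s))) ↔ inBarClass f := by
  simp only [inBarClass_addChild, hy, false_and, not_false_eq_true, and_true]

lemma not_isOpenRoot_of_not_inBarClass (h : ¬ inBarClass f) : ¬ IsOpenRoot f y :=
  fun hy => h (inBarClass_iff_exists_isOpenRoot.mpr ⟨y, hy⟩)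

lemma sum_addChild_eq {M : Type*} [AddCommMonoid M] {r : Fin n} (hr : IsOpenRoot f r)
    (F : Fin n → Fin k → M) :
    ∑ y, ∑ s, F y s = ∑ s, F r s + ∑ y, if IsOpenRoot f y then 0 else ∑ s, F y s := by
  have hroot : ∀ y, IsOpenRoot f y ↔ y = r := fun y =>
    ⟨fun hy => hy.1.unique hr.1, fun h => h ▸ hr⟩
  rw [← Finset.add_sum_erase _ _ (Finset.mem_univ r)]
  simp only [hroot]
  rw [sum_ite_eq_add_sum_erase, zero_add]

section Derivation

variable {A : Type*} [CommSemiring A] [Algebra A R] {D : Derivation A R R}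

lemma sum_bar_addNode_of_inBarClass (hf : IsForest f) (hk : 1 ≤ k) (hb : D b = k * a)
    (he : D e = k * a) (ha : D a = k * a * (b + e)) (hbar : inBarClass f) :
    ∑ c, (if inBarClass (addNode f c) then forestWeight b e a (addNode f c) else 0) =
      D (forestWeight b e a f) + (e + b) * forestWeight b e a f := by
  obtain ⟨r, hr⟩ := inBarClass_iff_exists_isOpenRoot.mp hbar
  have hroot : ∀ s : Fin k, (if inBarClass (addNode f (some (r, s))) then
        forestWeight b e a (addNode f (some (r, s))) else 0) =
      if (s : ℕ) < k - 1 then 0 else b * forestWeight b e a f := by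
    intro s
    rw [forestWeight_addChild_of_isOpenRoot hf hr]
    simp only [inBarClass_addChild_of_isOpenRoot hr]
    split_ifs <;> rfl
  have hrest : ∀ y, (if IsOpenRoot f y then 0 else ∑ s, if inBarClass (addNode f (some (y, s))) then
        forestWeight b e a (addNode f (some (y, s))) else 0) =
      if IsOpenRoot f y then 0 else ∑ s, forestWeight b e a (addNode f (some (y, s))) := by
    intro y
    split_ifs with hy
    · rfl
    · simp only [inBarClass_addChild_of_not_isOpenRoot hy, hbar, if_true]
  rw [Fintype.sum_option, if_pos inBarClass_addRoot, forestWeight_addRoot, if_pos hbar,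
    Fintype.sum_prod_type, sum_addChild_eq hr, Finset.sum_congr rfl fun s _ => hroot s,
    sum_ite_lt_pred hk, Finset.sum_congr rfl fun y _ => hrest y,
    sum_forestWeight_addChild hf hb he ha, smul_zero]
  ring

lemma sum_hat_addNode_of_not_inBarClass (hf : IsForest f) (hb : D b = k * a) (he : D e = k * a)
    (ha : D a = k * a * (b + e)) (hbar : ¬ inBarClass f) :
    ∑ c, (if inBarClass (addNode f c) then 0 else forestWeight b e a (addNode f c)) =
      D (forestWeight b e a f) := by
  rw [Fintype.sum_option, if_pos inBarClass_addRoot, zero_add, Fintype.sum_prod_type,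
    ← sum_forestWeight_addChild hf hb he ha]
  simp only [inBarClass_addChild, hbar, false_and, if_false, not_isOpenRoot_of_not_inBarClass hbar]

lemma sum_hat_addNode_of_inBarClass (hf : IsForest f) (hk : 1 ≤ k) (hbar : inBarClass f) :
    ∑ c, (if inBarClass (addNode f c) then 0 else forestWeight b e a (addNode f c)) =
      (k - 1 : ℕ) * a * forestWeight b e a f := by
  obtain ⟨r, hr⟩ := inBarClass_iff_exists_isOpenRoot.mp hbar
  have hroot : ∀ s : Fin k, (if inBarClass (addNode f (some (r, s))) then 0 else
        forestWeight b e a (addNode f (some (r, s)))) =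
      if (s : ℕ) < k - 1 then a * forestWeight b e a f else 0 := by
    intro s
    rw [forestWeight_addChild_of_isOpenRoot hf hr]
    simp only [inBarClass_addChild_of_isOpenRoot hr]
    split_ifs <;> rfl
  have hrest : ∀ y, (if IsOpenRoot f y then 0 else ∑ s,
      if inBarClass (addNode f (some (y, s))) then 0 else
        forestWeight b e a (addNode f (some (y, s)))) = 0 := by
    intro y
    split_ifs with hy
    · rfl
    · simp only [inBarClass_addChild_of_not_isOpenRoot hy, hbar, if_true, Finset.sum_const_zero]
  rw [Fintype.sum_option, if_pos inBarClass_addRoot, zero_add, Fintype.sum_prod_type,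
    sum_addChild_eq hr, Finset.sum_congr rfl fun s _ => hroot s, sum_ite_lt_pred hk,
    Finset.sum_eq_zero fun y _ => hrest y, add_zero, add_zero, nsmul_eq_mul, mul_assoc]

lemma sum_bar_addNode_of_not_inBarClass (hbar : ¬ inBarClass f) :
    ∑ c, (if inBarClass (addNode f c) then forestWeight b e a (addNode f c) else 0) =
      forestWeight b e a f := by
  rw [Fintype.sum_option, if_pos inBarClass_addRoot, forestWeight_addRoot, if_neg hbar, one_mul,
    Fintype.sum_prod_type]
  simp only [inBarClass_addChild, hbar, false_and, if_false, Finset.sum_const_zero, add_zero]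

lemma barSum_succ (hk : 1 ≤ k) (hb : D b = k * a) (he : D e = k * a)
    (ha : D a = k * a * (b + e)) :
    barSum k b e a (n + 1) =
      D (barSum k b e a n) + (e + b) * barSum k b e a n + hatSum k b e a n := by
  rw [barSum, sum_isForest_succ, barSum, hatSum, map_sum, Finset.mul_sum,
    ← Finset.sum_add_distrib, ← Finset.sum_add_distrib]
  refine Finset.sum_congr rfl fun f hf => ?_
  have hf : IsForest f := (Finset.mem_filter.mp hf).2
  by_cases hbar : inBarClass f
  · simp only [sum_bar_addNode_of_inBarClass hf hk hb he ha hbar, hbar, if_true, add_zero]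
  · simp only [sum_bar_addNode_of_not_inBarClass hbar, hbar, if_false, map_zero, mul_zero, zero_add]

lemma hatSum_succ (hk : 1 ≤ k) (hb : D b = k * a) (he : D e = k * a)
    (ha : D a = k * a * (b + e)) :
    hatSum k b e a (n + 1) = D (hatSum k b e a n) + (k - 1 : ℕ) * a * barSum k b e a n := by
  rw [hatSum, sum_isForest_succ, hatSum, barSum, map_sum, Finset.mul_sum, ← Finset.sum_add_distrib]
  refine Finset.sum_congr rfl fun f hf => ?_
  have hf : IsForest f := (Finset.mem_filter.mp hf).2
  by_cases hbar : inBarClass f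
  · simp only [sum_hat_addNode_of_inBarClass hf hk hbar, hbar, if_true, map_zero, zero_add]
  · simp only [sum_hat_addNode_of_not_inBarClass hf hb he ha hbar, hbar, if_false, mul_zero,
      add_zero]

end Derivation

end Recurrences

section Invariance

lemma derivation_mem_adjoin {A R : Type*} [CommSemiring A] [CommSemiring R] [Algebra A R]
    {D : Derivation A R R} {t : Set R} (hD : ∀ x ∈ t, D x ∈ Algebra.adjoin A t) {x : R}
    (hx : x ∈ Algebra.adjoin A t) : D x ∈ Algebra.adjoin A t := by
  induction hx using Algebra.adjoin_induction with
  | mem x hx => exact hD x hx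
  | algebraMap c => exact D.map_algebraMap c ▸ zero_mem _
  | add x y _ _ hx hy => exact D.map_add x y ▸ add_mem hx hy
  | mul x y hxt hyt hx hy =>
    exact D.leibniz x y ▸ add_mem (mul_mem hxt hy) (mul_mem hyt hx)

variable {R S F : Type*} [CommSemiring R] [CommSemiring S] [FunLike F R S] [RingHomClass F R S]
  {k n : ℕ} {b e a : R}

lemma map_forestWeight {α : Type} [LinearOrder α] [Fintype α] (φ : F)
    (f : α → Option (α × Fin k)) :
    φ (forestWeight b e a f) = forestWeight (φ b) (φ e) (φ a) f := by
  simp only [forestWeight, nodeWeight, internalWeight, map_prod, apply_ite φ, map_mul, map_one]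

lemma map_barSum (φ : F) : φ (barSum k b e a n) = barSum k (φ b) (φ e) (φ a) n := by
  simp only [barSum, map_sum, apply_ite φ, map_zero, map_forestWeight]

lemma map_hatSum (φ : F) : φ (hatSum k b e a n) = hatSum k (φ b) (φ e) (φ a) n := by
  simp only [hatSum, map_sum, apply_ite φ, map_zero, map_forestWeight]

lemma not_inBarClass_of_isEmpty {α : Type} [LinearOrder α] [IsEmpty α]
    (f : α → Option (α × Fin k)) : ¬ inBarClass f :=
  fun ⟨r, _⟩ => isEmptyElim r

lemma barSum_zero : barSum k b e a 0 = 0 :=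
  Finset.sum_eq_zero fun f _ => if_neg (not_inBarClass_of_isEmpty f)

lemma hatSum_zero : hatSum k b e a 0 = 1 := by
  have hforest : ∀ f : Fin 0 → Option (Fin 0 × Fin k), IsForest f := fun f x => isEmptyElim x
  simp [hatSum, hforest, not_inBarClass_of_isEmpty, forestWeight]

lemma barSum_hatSum_mem_adjoin {A : Type*} [CommSemiring A] [Algebra A R] {D : Derivation A R R}
    (hk : 1 ≤ k) (hb : D b = k * a) (he : D e = k * a) (ha : D a = k * a * (b + e)) (n : ℕ) :
    barSum k b e a n ∈ Algebra.adjoin A {b + e, a} ∧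
      hatSum k b e a n ∈ Algebra.adjoin A {b + e, a} := by
  have hbe : b + e ∈ Algebra.adjoin A {b + e, a} := Algebra.subset_adjoin (Or.inl rfl)
  have ha' : a ∈ Algebra.adjoin A {b + e, a} := Algebra.subset_adjoin (Or.inr rfl)
  have hD : ∀ x ∈ ({b + e, a} : Set R), D x ∈ Algebra.adjoin A {b + e, a} := by
    rintro x (rfl | rfl)
    · rw [D.map_add, hb, he]
      exact add_mem (mul_mem (natCast_mem _ k) ha') (mul_mem (natCast_mem _ k) ha')
    · rw [ha]
      exact mul_mem (mul_mem (natCast_mem _ k) ha') hbe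
  induction n with
  | zero =>
    rw [barSum_zero, hatSum_zero]
    exact ⟨zero_mem _, one_mem _⟩
  | succ n ih =>
    rw [barSum_succ hk hb he ha, hatSum_succ hk hb he ha, add_comm e b]
    exact ⟨add_mem (add_mem (derivation_mem_adjoin hD ih.1) (mul_mem hbe ih.1)) ih.2,
      add_mem (derivation_mem_adjoin hD ih.2)
        (mul_mem (mul_mem (natCast_mem _ _) ha') ih.1)⟩

lemma barSum_hatSum_eq_of_add_eq (hk : 1 ≤ k) {b' e' : R} (h : b + e = b' + e') :
    barSum k b e a n = barSum k b' e' a n ∧ hatSum k b e a n = hatSum k b' e' a n := by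
  let D : Derivation ℕ (MvPolynomial (Fin 3) ℕ) (MvPolynomial (Fin 3) ℕ) :=
    MvPolynomial.mkDerivation ℕ ![k * .X 2, k * .X 2, k * .X 2 * (.X 0 + .X 1)]
  obtain ⟨hbar, hhat⟩ := barSum_hatSum_mem_adjoin (D := D) (b := .X 0) (e := .X 1) (a := .X 2)
    hk (MvPolynomial.mkDerivation_X ..) (MvPolynomial.mkDerivation_X ..)
    (MvPolynomial.mkDerivation_X ..) n
  have heq : Set.EqOn (MvPolynomial.aeval (R := ℕ) ![b, e, a]) (MvPolynomial.aeval ![b', e', a])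
      (Algebra.adjoin ℕ {MvPolynomial.X 0 + MvPolynomial.X 1, MvPolynomial.X 2} :
        Subalgebra ℕ (MvPolynomial (Fin 3) ℕ)) :=
    AlgHom.eqOn_adjoin_iff.mpr fun x hx => by
      rcases hx with rfl | rfl <;> simp [h]
  exact ⟨by simpa [map_barSum] using heq hbar, by simpa [map_hatSum] using heq hhat⟩

lemma excedanceCycleSum_eq_barSum_add_hatSum_of_derivation {A : Type*} [CommSemiring A]
    [Algebra A R] {D : Derivation A R R} (hk : 1 ≤ k) (hb : D b = k * (b * e))
    (he : D e = k * (b * e)) (n : ℕ) :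
    excedanceCycleSum k e b n = b * barSum k b e (b * e) n + hatSum k b e (b * e) n := by
  have ha : D (b * e) = k * (b * e) * (b + e) := by
    rw [D.leibniz, hb, he, smul_eq_mul, smul_eq_mul]
    ring
  induction n with
  | zero => simp [excedanceCycleSum, barSum_zero, hatSum_zero, cycStat]
  | succ n ih =>
    have hb' : D b = k * (e * b) := mul_comm b e ▸ hb
    have he' : D e = k * (e * b) := mul_comm b e ▸ he
    rw [excedanceCycleSum_succ D he' hb', ih, barSum_succ hk hb he ha, hatSum_succ hk hb he ha,
      D.map_add, D.leibniz, hb, smul_eq_mul, smul_eq_mul]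
    obtain ⟨m, rfl⟩ := Nat.exists_eq_add_of_le' hk
    rw [Nat.add_sub_cancel]
    push_cast
    ring

lemma excedanceCycleSum_eq_barSum_add_hatSum (hk : 1 ≤ k) (b e : R) (n : ℕ) :
    excedanceCycleSum k e b n = b * barSum k b e (b * e) n + hatSum k b e (b * e) n := by
  let D : Derivation ℕ (MvPolynomial (Fin 2) ℕ) (MvPolynomial (Fin 2) ℕ) :=
    MvPolynomial.mkDerivation ℕ fun _ => k * (.X 0 * .X 1)
  have h := congrArg (MvPolynomial.aeval (R := ℕ) ![b, e])
    (excedanceCycleSum_eq_barSum_add_hatSum_of_derivation (D := D) hk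
      (MvPolynomial.mkDerivation_X ..) (MvPolynomial.mkDerivation_X ..) n)
  simpa [map_excedanceCycleSum, map_barSum, map_hatSum] using h

end Invariance

section Reduced

open scoped Finset

variable {α : Type} [LinearOrder α] {k : ℕ} {f : α → Option (α × Fin k)} {z : α}

/-- `f` has neither young leaves nor removable old leaves; these are the forests counted by the
γ-coefficients. -/
def IsReducedForest (f : α → Option (α × Fin k)) : Prop :=
  NoYoungLeaf f ∧ ∀ z, ¬ HasRemovableOldLeaf f z

lemma IsReducedForest.not_isYoungLeaf (h : IsReducedForest f) : ¬ IsYoungLeaf f z :=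
  h.1 z

lemma NoYoungLeaf.exists_removableOldLeaf_iff (h : NoYoungLeaf f) :
    (∃ u, removableOldLeaf f u) ↔ ∃ z, HasRemovableOldLeaf f z := by
  constructor
  · rintro ⟨u, ⟨z', s', hs', hmax⟩, hleaf, z, s, hs, hz, -, hslots, hroots⟩
    obtain rfl : z' = z := congrArg Prod.fst (Option.some.inj (hs'.symm.trans hs))
    exact ⟨z', hz, hslots, u, ⟨⟨s, hs⟩, hmax⟩, hleaf, hroots⟩
  · rintro ⟨z, hz, hslots, u, hu, hleaf, hroots⟩
    obtain ⟨s, hs⟩ := hu.1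
    refine ⟨u, oldNode_iff_exists_isOldChild.mpr ⟨z, hu⟩, hleaf, z, s, hs, hz, ?_, hslots, hroots⟩
    rintro x ⟨t, ht⟩ hxu
    by_contra hxleaf
    refine h x ⟨⟨⟨z, t, ht⟩, fun hold => hxu ?_⟩, hxleaf⟩
    obtain ⟨y, hy⟩ := oldNode_iff_exists_isOldChild.mp hold
    obtain ⟨t', ht'⟩ := hy.1
    obtain rfl : y = z := congrArg Prod.fst (Option.some.inj (ht'.symm.trans ht))
    exact hy.unique hu

lemma isReducedForest_iff : IsReducedForest f ↔ NoYoungLeaf f ∧ (∀ u, ¬ removableOldLeaf f u) ∧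
    ∀ u, ¬ removableYoungLeaf f u := by
  refine and_congr_right fun h => ?_
  have hyoung : ∀ u, ¬ removableYoungLeaf f u := fun u hu => h u ⟨hu.1, hu.2.1⟩
  rw [and_iff_left hyoung, ← not_exists, ← not_exists, h.exists_removableOldLeaf_iff]

lemma IsForest.exists_isLastRoot [Finite α] [Nonempty α] (hf : IsForest f) :
    ∃ r, IsLastRoot f r := by
  obtain ⟨x, hx⟩ := Finite.exists_min (id : α → α)
  have hroot : f x = none :=
    Option.eq_none_iff_forall_ne_some.mpr fun ⟨y, s⟩ hy => (hx y).not_gt (hf x y s hy)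
  obtain ⟨r, hr, hmax⟩ := Set.exists_max_image {x | f x = none} id (Set.toFinite _) ⟨x, hroot⟩
  exact ⟨r, hr, hmax⟩

lemma inHatClass_iff_not_inBarClass [Finite α] [Nonempty α] (hf : IsForest f) :
    inHatClass f ↔ ¬ inBarClass f := by
  rw [inBarClass_iff_exists_isOpenRoot]
  constructor
  · rintro ⟨r, hr, hlast, -, x, j, hj, hx⟩ ⟨r', hr', hslots⟩
    obtain rfl := IsLastRoot.unique ⟨hr, hlast⟩ hr'
    exact hslots x j hj hx
  · intro h
    obtain ⟨r, hr⟩ := hf.exists_isLastRoot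
    have hslots : ¬ FirstSlotsEmpty f r := fun hslots => h ⟨r, hr, hslots⟩
    simp only [FirstSlotsEmpty, not_forall, not_not] at hslots
    obtain ⟨x, j, hj, hx⟩ := hslots
    exact ⟨r, hr.1, hr.2, ⟨x, j, hx⟩, x, j, hj, hx⟩

variable {R : Type*} [CommSemiring R] {e a : R}

lemma IsReducedForest.nodeWeight_zero_left (h : IsReducedForest f) :
    nodeWeight 0 e a f z = (if HasOldLeaf f z then a else 1) *
      if ¬ HasOldLeaf f z ∧ ¬ IsOldLeaf f z ∧ ¬ IsOpenRoot f z then e else 1 := by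
  rw [nodeWeight, if_neg (h.2 z), if_neg h.not_isYoungLeaf, internalWeight]
  split_ifs <;> first | tauto | simp

lemma IsReducedForest.sum_indicator_eq_one (h : IsReducedForest f) (z : α) :
    (if HasOldLeaf f z then 1 else 0) + (if IsOldLeaf f z then 1 else 0) +
      (if IsOpenRoot f z then 1 else 0) +
      (if ¬ HasOldLeaf f z ∧ ¬ IsOldLeaf f z ∧ ¬ IsOpenRoot f z then 1 else 0) = 1 := by
  have hold : HasOldLeaf f z → ¬ IsOldLeaf f z := fun hz hleaf => hleaf.2 hz.hasChild
  have hopen : IsOpenRoot f z → ¬ HasOldLeaf f z := fun hz hleaf =>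
    h.2 z (hz.hasRemovableOldLeaf hleaf)
  have hroot : IsOpenRoot f z → ¬ IsOldLeaf f z := fun hz hleaf => hleaf.1.ne_none hz.1.1
  split_ifs <;> tauto

variable [Fintype α]

lemma oleafStat_pos_of_not_inBarClass [Nonempty α] (hf : IsForest f) (h : ¬ inBarClass f) :
    0 < oleafStat f := by
  obtain ⟨v, hv⟩ := Finite.exists_max (id : α → α)
  have hleaf : ¬ hasChild f v := fun ⟨x, s, hx⟩ => (hv x).not_gt (hf x v s hx)
  obtain ⟨⟨y, s⟩, hy⟩ := Option.ne_none_iff_exists'.mp fun hroot =>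
    h ⟨v, hroot, fun r _ => hv r, Or.inl hleaf⟩
  exact Finset.card_pos.mpr ⟨v, by simpa using ⟨⟨y, s, hy, fun x _ => hv x⟩, hleaf⟩⟩

lemma card_isOldLeaf : #{v | IsOldLeaf f v} = oleafStat f :=
  congrArg Finset.card (Finset.filter_congr fun _ _ => Iff.rfl)

lemma card_hasOldLeaf : #{z | HasOldLeaf f z} = oleafStat f := by
  have hchild : ∀ z, ∑ v, (if IsOldChild f z v ∧ ¬ hasChild f v then 1 else 0) =
      if HasOldLeaf f z then 1 else 0 := fun z =>
    sum_ite_eq_ite_of_exists_iff (q := HasOldLeaf f z) (fun _ _ hu hv => hu.1.unique hv.1)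
      Iff.rfl 1
  have hparent : ∀ v, ∑ z, (if IsOldChild f z v ∧ ¬ hasChild f v then 1 else 0) =
      if IsOldLeaf f v then 1 else 0 := fun v =>
    sum_ite_eq_ite_of_exists_iff (fun _ _ hy hz => hy.1.parent_unique hz.1) isOldLeaf_iff.symm 1
  calc #{z | HasOldLeaf f z}
      = ∑ z, ∑ v, if IsOldChild f z v ∧ ¬ hasChild f v then 1 else 0 := by
        simp only [hchild, Finset.card_filter]
    _ = oleafStat f := by
        rw [Finset.sum_comm, ← card_isOldLeaf]
        simp only [hparent, Finset.card_filter]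

lemma card_isOpenRoot : #{z | IsOpenRoot f z} = if inBarClass f then 1 else 0 := by
  rw [Finset.card_filter]
  exact sum_ite_eq_ite_of_exists_iff (fun _ _ hy hz => hy.1.unique hz.1)
    inBarClass_iff_exists_isOpenRoot.symm 1

lemma forestWeight_zero_left_of_not_isReducedForest (h : ¬ IsReducedForest f) :
    forestWeight 0 e a f = 0 := by
  rw [IsReducedForest, NoYoungLeaf, not_and_or, not_forall_not, not_forall_not] at h
  rcases h with ⟨v, hv⟩ | ⟨z, hz⟩
  · refine Finset.prod_eq_zero (Finset.mem_univ v) ?_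
    have hvleaf : ¬ HasOldLeaf f v := fun h => hv.2 h.hasChild
    have hvrem : ¬ HasRemovableOldLeaf f v := fun h => hvleaf h.hasOldLeaf
    have hvold : ¬ IsOldLeaf f v := fun h => hv.1.2 h.1
    have hvyoung : IsYoungLeaf f v := hv
    rw [nodeWeight, if_neg hvrem, if_neg hvleaf, if_neg hvold, if_pos hvyoung]
  · refine Finset.prod_eq_zero (Finset.mem_univ z) ?_
    rw [nodeWeight, if_pos hz, zero_mul]

lemma IsReducedForest.exists_forestWeight_zero_left (h : IsReducedForest f) :
    ∃ m, 2 * oleafStat f + (if inBarClass f then 1 else 0) + m = Fintype.card α ∧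
      forestWeight 0 e a f = a ^ oleafStat f * e ^ m := by
  refine ⟨#{z | ¬ HasOldLeaf f z ∧ ¬ IsOldLeaf f z ∧ ¬ IsOpenRoot f z}, ?_, ?_⟩
  · have hcard := Finset.sum_congr rfl fun z (_ : z ∈ Finset.univ) => h.sum_indicator_eq_one z
    simp only [Finset.sum_add_distrib, ← Finset.card_filter, card_hasOldLeaf, card_isOldLeaf,
      card_isOpenRoot, ← Finset.card_eq_sum_ones, Finset.card_univ] at hcard
    rw [two_mul, hcard]
  · simp only [forestWeight, h.nodeWeight_zero_left, Finset.prod_mul_distrib, Finset.prod_ite,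
      Finset.prod_const, card_hasOldLeaf, one_pow, mul_one]

lemma isPalindromicUnimodal_forestWeight {N : ℕ}
    (hN : N + (if inBarClass f then 1 else 0) = Fintype.card α) :
    IsPalindromicUnimodal N (forestWeight 0 (1 + X) X f : ℝ[X]) := by
  by_cases h : IsReducedForest f
  · obtain ⟨m, hm, hf⟩ := h.exists_forestWeight_zero_left (e := (1 + X : ℝ[X])) (a := X)
    obtain rfl : N = 2 * oleafStat f + m := by omega
    exact hf ▸ .X_pow_mul_one_add_X_pow _ _
  · rw [forestWeight_zero_left_of_not_isReducedForest h]
    exact .zero N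

end Reduced

section Gamma

variable {n k : ℕ}

/-- The forests counted by the γ-coefficient `\hat γ_{n,k,i}`. -/
abbrev GammaForest (n k i : ℕ) : Type :=
  {f : Fin n → Option (Fin n × Fin k) //
    IsForest f ∧ inHatClass f ∧ oleafStat f = i ∧ NoYoungLeaf f ∧
      (∀ u, ¬ removableOldLeaf f u) ∧ (∀ u, ¬ removableYoungLeaf f u)}

lemma isPalindromicUnimodal_barSum :
    IsPalindromicUnimodal n (barSum k 0 (1 + X) X (n + 1) : ℝ[X]) :=
  .sum fun f _ => by
    split_ifs with hbar
    · exact isPalindromicUnimodal_forestWeight (by rw [if_pos hbar, Fintype.card_fin])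
    · exact .zero n

lemma isPalindromicUnimodal_hatSum :
    IsPalindromicUnimodal n (hatSum k 0 (1 + X) X n : ℝ[X]) :=
  .sum fun f _ => by
    split_ifs with hbar
    · exact .zero n
    · exact isPalindromicUnimodal_forestWeight (by rw [if_neg hbar, Fintype.card_fin, add_zero])

lemma hatSum_zero_left {R : Type*} [CommSemiring R] (hn : 1 ≤ n) (e a : R) :
    hatSum k 0 e a n = ∑ i ∈ Finset.Icc 1 (n / 2),
      (Nat.card (GammaForest n k i) : R) * a ^ i * e ^ (n - 2 * i) := by
  have : NeZero n := ⟨Nat.ne_of_gt hn⟩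
  have hweight : ∀ f : Fin n → Option (Fin n × Fin k), ¬ inBarClass f → IsReducedForest f →
      2 * oleafStat f ≤ n ∧
        forestWeight 0 e a f = a ^ oleafStat f * e ^ (n - 2 * oleafStat f) := fun f hbar hred => by
    obtain ⟨m, hm, hf⟩ := hred.exists_forestWeight_zero_left (e := e) (a := a)
    rw [if_neg hbar, Fintype.card_fin, add_zero] at hm
    obtain rfl : m = n - 2 * oleafStat f := by omega
    exact ⟨by omega, hf⟩
  have hsum : hatSum k 0 e a n =
      ∑ f : Fin n → Option (Fin n × Fin k) with IsForest f ∧ ¬ inBarClass f ∧ IsReducedForest f,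
        a ^ oleafStat f * e ^ (n - 2 * oleafStat f) := by
    simp only [hatSum, Finset.sum_filter]
    refine Finset.sum_congr rfl fun f _ => ?_
    by_cases hred : IsReducedForest f <;> by_cases hbar : inBarClass f <;>
      simp [hred, hbar, hweight, forestWeight_zero_left_of_not_isReducedForest]
  rw [hsum, ← Finset.sum_fiberwise_of_maps_to (t := Finset.Icc 1 (n / 2)) (g := oleafStat)]
  · refine Finset.sum_congr rfl fun i _ => ?_
    rw [Finset.sum_congr rfl fun f hf => by rw [(Finset.mem_filter.mp hf).2], Finset.sum_const,
      nsmul_eq_mul, mul_assoc, Nat.card_eq_fintype_card, Fintype.card_subtype,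
      Finset.filter_filter]
    congr 3
    refine Finset.filter_congr fun f _ => ?_
    rw [← isReducedForest_iff]
    grind [inHatClass_iff_not_inBarClass]
  · simp only [Finset.mem_filter_univ, Finset.mem_Icc]
    rintro f ⟨hf, hbar, hred⟩
    exact ⟨oleafStat_pos_of_not_inBarClass hf hbar, by have := hweight f hbar hred; omega⟩

lemma coeff_zero_hatSum (hn : 1 ≤ n) : (hatSum k 0 (1 + X) X n : ℝ[X]).coeff 0 = 0 := by
  rw [hatSum_zero_left hn, finsetSum_coeff]
  refine Finset.sum_eq_zero fun i hi => ?_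
  have hi₀ : i ≠ 0 := Nat.ne_of_gt (Finset.mem_Icc.mp hi).1
  rw [mul_coeff_zero, mul_coeff_zero, coeff_zero_eq_eval_zero (X ^ i), eval_pow, eval_X,
    zero_pow hi₀, mul_zero, zero_mul]

lemma Apoly_eq_barSum_add_hatSum (hk : 1 ≤ k) (n : ℕ) :
    Apoly k n = barSum k 0 (1 + X) X n + hatSum k 0 (1 + X) X n := by
  obtain ⟨hbar, hhat⟩ := barSum_hatSum_eq_of_add_eq (n := n) (a := (X : ℝ[X])) hk
    (zero_add (1 + X)).symm
  rw [Apoly_eq_excedanceCycleSum, excedanceCycleSum_eq_barSum_add_hatSum hk, one_mul, one_mul,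
    hbar, hhat]

end Gamma

/-- The second half of the main theorem: in the symmetric decomposition
`A_n^{(k)} = a + x·b`, the part `x·b` is γ-positive with center `n/2`:
`x·b = Σ_{i=1}^{⌊n/2⌋} γ̂_{n,k,i} x^i (1+x)^{n-2i}`, where `γ̂_{n,k,i}` counts the
increasing pruned even `k`-ary forests on `{1,…,n}` whose rightmost tree is neither a
singleton nor has its first `k-1` root-children all leaves, having `i` old leaves, no
young leaves, and no removable old or removable young leaves.  In particular
`A_n^{(k)}` is bi-γ-positive and hence alternating increasing. -/
theorem b_part_gamma_positive (n k : ℕ) (hn : 1 ≤ n) (hk : 1 ≤ k)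
    (a b : Polynomial ℝ)
    (hdec : Apoly k n = a + X * b)
    (ha1 : a.natDegree ≤ n - 1) (ha2 : a.reflect (n - 1) = a)
    (hb1 : b.natDegree ≤ n - 2) (hb2 : b.reflect (n - 2) = b) :
    (X * b = ∑ i ∈ Finset.Icc 1 (n / 2),
      C ((Nat.card {f : Fin n → Option (Fin n × Fin k) //
            IsForest f ∧ inHatClass f ∧ oleafStat f = i ∧ NoYoungLeaf f ∧
              (∀ u, ¬ removableOldLeaf f u) ∧ (∀ u, ¬ removableYoungLeaf f u)} : ℕ) : ℝ) *
        X ^ i * (1 + X) ^ (n - 2 * i)) ∧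
    (∀ j : ℕ, 2 * j ≤ n - 1 → (Apoly k n).coeff j ≤ (Apoly k n).coeff (n - 1 - j)) ∧
    (∀ j : ℕ, 2 * j + 1 ≤ n - 1 →
      (Apoly k n).coeff (n - 1 - j) ≤ (Apoly k n).coeff (j + 1)) := by
  obtain ⟨N, rfl⟩ := Nat.exists_eq_add_of_le' hn
  rw [Nat.add_sub_cancel] at ha1 ha2 ⊢
  have hp : IsPalindromicUnimodal N (barSum k 0 (1 + X) X (N + 1) : ℝ[X]) :=
    isPalindromicUnimodal_barSum
  have hq : IsPalindromicUnimodal (N + 1) (hatSum k 0 (1 + X) X (N + 1) : ℝ[X]) :=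
    isPalindromicUnimodal_hatSum
  have hApoly := Apoly_eq_barSum_add_hatSum hk (N + 1)
  refine ⟨?_, fun j hj => ?_, fun j hj => ?_⟩
  · rw [hp.X_mul_eq_of_add_eq hq (coeff_zero_hatSum hn) ha1 ha2 hb2
      (hApoly ▸ hdec), hatSum_zero_left hn]
    simp only [GammaForest, map_natCast]
  · rw [hApoly]
    exact hp.coeff_add_le_coeff_add hq hj
  · rw [hApoly]
    exact hp.coeff_add_rev_le_coeff_add hq hj

end
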